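/- arXiv:2502.09453 — 11 statements merged into one kernel-verified Lean document; each statement's English description precedes it below -/
import Mathlib

section
/- For every finite simple graph G = (V,E) with at least one vertex, the VC-dimension of the star class satisfies Δ(G) ≤ VCD(C_star(G)) ≤ Δ(G) + 1. -/
open scoped Classical

noncomputable section

/-! ### Concept classes, VC-dimension, teaching dimension, RTD -/

variable {X : Type*}

/-- A set `S` is shattered by the concept class `𝒞` if every subset of `S`
is the trace on `S` of some concept in `𝒞`. -/
def Shatters [DecidableEq X] (𝒞 : Finset (Finset X)) (S : Finset X) : Prop :=
  ∀ S' ⊆ S, ∃ C ∈ 𝒞, C ∩ S = S'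

/-- The VC-dimension of a concept class: the maximum size of a shattered set. -/
def VCD [DecidableEq X] (𝒞 : Finset (Finset X)) : ℕ :=
  sSup {n | ∃ S : Finset X, Shatters 𝒞 S ∧ S.card = n}

/-- `D` is a teaching set for the concept `C` within the class `𝒞`:
no other concept of `𝒞` agrees with `C` on all of `D`. -/
def IsTeachingSet [DecidableEq X] (𝒞 : Finset (Finset X)) (C D : Finset X) : Prop :=
  ∀ C' ∈ 𝒞, C' ≠ C → ∃ x ∈ D, ¬ ((x ∈ C') ↔ (x ∈ C))

/-- The teaching dimension of the concept `C` within the class `𝒞`: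
the minimum size of a teaching set for `C` in `𝒞`. -/
def TD [DecidableEq X] (𝒞 : Finset (Finset X)) (C : Finset X) : ℕ :=
  sInf {n | ∃ D : Finset X, IsTeachingSet 𝒞 C D ∧ D.card = n}

/-- The minimum teaching dimension over all concepts of the class. -/
def TDmin [DecidableEq X] (𝒞 : Finset (Finset X)) : ℕ :=
  sInf {n | ∃ C ∈ 𝒞, TD 𝒞 C = n}

/-- The recursive teaching dimension: with `𝒞_min` the set of concepts of `𝒞` whose
teaching dimension equals `TDmin 𝒞`, we have `RTD 𝒞 = TDmin 𝒞` if `𝒞 = 𝒞_min`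
and `RTD 𝒞 = max (TDmin 𝒞) (RTD (𝒞 \ 𝒞_min))` otherwise. -/
def RTD [DecidableEq X] (𝒞 : Finset (Finset X)) : ℕ :=
  if h : 𝒞 = 𝒞.filter (fun C => TD 𝒞 C = TDmin 𝒞) then TDmin 𝒞
  else max (TDmin 𝒞) (RTD (𝒞 \ 𝒞.filter (fun C => TD 𝒞 C = TDmin 𝒞)))
termination_by 𝒞.card
decreasing_by
  have hne : 𝒞.Nonempty := by
    rcases Finset.eq_empty_or_nonempty 𝒞 with he | hne
    · exact absurd (by simp [he]) h
    · exact hne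
  obtain ⟨C₀, hC₀⟩ := hne
  have hmem : TDmin 𝒞 ∈ {n | ∃ C ∈ 𝒞, TD 𝒞 C = n} :=
    Nat.sInf_mem ⟨TD 𝒞 C₀, C₀, hC₀, rfl⟩
  obtain ⟨C, hC, hTD⟩ := hmem
  refine Finset.card_lt_card ?_
  refine (Finset.ssubset_iff_of_subset Finset.sdiff_subset).mpr ?_
  exact ⟨C, hC, by simp [Finset.mem_sdiff, Finset.mem_filter, hC, hTD]⟩

/-! ### Graph-theoretic notions -/

/-- The degree of a vertex in a graph on a finite vertex type. -/
def deg {W : Type*} [Fintype W] (T : SimpleGraph W) (v : W) : ℕ :=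
  (Finset.univ.filter (fun w => T.Adj v w)).card

/-- A leaf of a graph (in particular, of a tree) is a vertex of degree 1. -/
def IsLeaf {W : Type*} [Fintype W] (T : SimpleGraph W) (v : W) : Prop :=
  deg T v = 1

/-- The number of leaves of a graph (in particular, of a tree). -/
def leafCount {W : Type*} [Fintype W] (T : SimpleGraph W) : ℕ :=
  (Finset.univ.filter (fun v => IsLeaf T v)).card

variable {V : Type*} [Fintype V] [DecidableEq V]

/-- The open neighborhood of a vertex, as a finset. -/
def nbrFinset (G : SimpleGraph V) (x : V) : Finset V :=
  Finset.univ.filter (fun y => G.Adj x y)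

/-- The closed neighborhood of a vertex, as a finset. -/
def closedNbr (G : SimpleGraph V) (x : V) : Finset V :=
  insert x (nbrFinset G x)

/-- The maximum degree `Δ(G)`. -/
def maxDeg (G : SimpleGraph V) : ℕ :=
  Finset.univ.sup (deg G)

/-- The closed neighborhood of a set of vertices. -/
def closedNbrSet (G : SimpleGraph V) (A : Finset V) : Finset V :=
  A.biUnion (closedNbr G)

/-- The open neighborhood of a set of vertices: `N_G(A) \ A`. -/
def openNbrSet (G : SimpleGraph V) (A : Finset V) : Finset V :=
  closedNbrSet G A \ A

/-- The star class of `G`: all sets `{x} ∪ X` with `X` a set of neighbors of `x`. -/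
def Cstar (G : SimpleGraph V) : Finset (Finset V) :=
  Finset.univ.filter (fun C => ∃ x : V, ∃ Y ⊆ nbrFinset G x, C = insert x Y)

/-- `A` is a connected set of `G`: the induced subgraph `G[A]` is connected. -/
def IsConnSet (G : SimpleGraph V) (A : Finset V) : Prop :=
  (G.induce (A : Set V)).Connected

/-- The class of connected sets of `G` (including the empty set). -/
def Ccon (G : SimpleGraph V) : Finset (Finset V) :=
  Finset.univ.filter (fun A => A = ∅ ∨ IsConnSet G A)

/-- For connected `G`: the maximum number of leaves over all spanning trees of `G`. -/
def ell (G : SimpleGraph V) : ℕ :=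
  sSup {k | ∃ T : SimpleGraph V, T ≤ G ∧ T.IsTree ∧ leafCount T = k}

/-- For a general graph `G`: the maximum of `ell` over the connected components of `G`. -/
def ellGen (G : SimpleGraph V) : ℕ :=
  sSup {k | ∃ c : G.ConnectedComponent, ell (G.induce c.supp) = k}

/-- Every pair of distinct elements of `L` can be connected by a path in `G` which
contains neither `u` nor any element of `L` other than the two endpoints. -/
def ConnectableAvoiding (G : SimpleGraph V) (L : Set V) (u : V) : Prop :=
  ∀ a ∈ L, ∀ b ∈ L, a ≠ b → ∃ p : G.Walk a b, p.IsPath ∧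
    ∀ v ∈ p.support, v ≠ u ∧ (v ∈ L → v = a ∨ v = b)

end

/-- For every finite simple graph with at least one vertex,
`Δ(G) ≤ VCD(C_star(G)) ≤ Δ(G) + 1`. -/
theorem star_vcd_bounds {V : Type*} [Fintype V] [DecidableEq V] [Nonempty V]
    (G : SimpleGraph V) :
    maxDeg G ≤ VCD (Cstar G) ∧ VCD (Cstar G) ≤ maxDeg G + 1 := by
  have hub : ∀ n ∈ {n | ∃ S : Finset V, Shatters (Cstar G) S ∧ S.card = n},
      n ≤ maxDeg G + 1 := by
    rintro n ⟨S, hS, rfl⟩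
    obtain ⟨C, hC, hCS⟩ := hS S (Finset.Subset.refl S)
    obtain ⟨x, Y, hY, rfl⟩ := (Finset.mem_filter.mp hC).2
    have h1 : S.card ≤ (insert x Y).card :=
      Finset.card_le_card (Finset.inter_eq_right.mp hCS)
    have h2 := Finset.card_insert_le x Y
    have h3 : Y.card ≤ deg G x := Finset.card_le_card hY
    have h4 : deg G x ≤ maxDeg G := Finset.le_sup (f := deg G) (Finset.mem_univ x)
    omega
  refine ⟨?_, csSup_le' hub⟩
  refine Finset.sup_le fun x _ => le_csSup ⟨_, hub⟩ ⟨nbrFinset G x, ?_, rfl⟩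
  intro S' hS'
  refine ⟨insert x S', Finset.mem_filter.mpr ⟨Finset.mem_univ _, x, S', hS', rfl⟩, ?_⟩
  have hx : x ∉ nbrFinset G x := by simp [nbrFinset]
  rw [Finset.insert_inter_of_notMem hx]
  exact Finset.inter_eq_left.mpr hS'
end

section
/- For every finite simple graph G = (V,E) with at least one vertex, the recursive teaching dimension of the star class satisfies Δ(G) ≤ RTD(C_star(G)) ≤ Δ(G) + 1. -/
open scoped Classical

theorem TD_exists {X : Type*} [DecidableEq X] [Fintype X] (𝒞 : Finset (Finset X)) (C : Finset X) :
    ∃ D : Finset X, IsTeachingSet 𝒞 C D ∧ D.card = TD 𝒞 C := by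
  have : TD 𝒞 C ∈ {n | ∃ D : Finset X, IsTeachingSet 𝒞 C D ∧ D.card = n} := by
    refine Nat.sInf_mem ⟨_, Finset.univ, ?_, rfl⟩
    intro C' _ hne
    by_contra h
    push Not at h
    exact hne (Finset.ext fun x => h x (Finset.mem_univ x))
  exact this

theorem TD_le {X : Type*} [DecidableEq X] (𝒞 : Finset (Finset X)) (C D : Finset X)
    (h : IsTeachingSet 𝒞 C D) : TD 𝒞 C ≤ D.card :=
  Nat.sInf_le ⟨D, h, rfl⟩

theorem TDmin_le {X : Type*} [DecidableEq X] (𝒞 : Finset (Finset X)) (C : Finset X)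
    (h : C ∈ 𝒞) : TDmin 𝒞 ≤ TD 𝒞 C :=
  Nat.sInf_le ⟨C, h, rfl⟩

theorem TDmin_le_RTD {X : Type*} [DecidableEq X] (𝒞 : Finset (Finset X)) :
    TDmin 𝒞 ≤ RTD 𝒞 := by
  rw [RTD]
  split_ifs
  · exact le_rfl
  · exact le_max_left _ _

theorem TDmin_exists {X : Type*} [DecidableEq X] (𝒞 : Finset (Finset X)) (h : 𝒞.Nonempty) :
    ∃ C ∈ 𝒞, TD 𝒞 C = TDmin 𝒞 := by
  obtain ⟨C₀, hC₀⟩ := h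
  have hmem : TDmin 𝒞 ∈ {n | ∃ C ∈ 𝒞, TD 𝒞 C = n} :=
    Nat.sInf_mem ⟨TD 𝒞 C₀, C₀, hC₀, rfl⟩
  exact hmem

theorem sub_TDmin_le_RTD {X : Type*} [DecidableEq X] [Fintype X] (𝒟 : Finset (Finset X))
    (hne : 𝒟.Nonempty) (n : ℕ) : ∀ 𝒞 : Finset (Finset X), 𝒞.card ≤ n → 𝒟 ⊆ 𝒞 →
    TDmin 𝒟 ≤ RTD 𝒞 := by
  induction n with
  | zero =>
    intro 𝒞 hc hs
    obtain ⟨C, hC⟩ := hne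
    have := Finset.card_pos.2 ⟨C, hs hC⟩
    omega
  | succ n ih =>
    intro 𝒞 hc hs
    by_cases hex : ∃ C ∈ 𝒟, TD 𝒞 C = TDmin 𝒞
    · obtain ⟨C, hC, hT⟩ := hex
      obtain ⟨D, hD, hDc⟩ := TD_exists 𝒞 C
      have h1 : IsTeachingSet 𝒟 C D := fun C' h' => hD C' (hs h')
      have h2 := TDmin_le 𝒟 C hC
      have h3 := TD_le 𝒟 C D h1
      have h4 := TDmin_le_RTD 𝒞
      omega
    · push Not at hex
      rw [RTD]
      split_ifs with h
      · obtain ⟨C, hC⟩ := hne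
        have h1 := hs hC
        rw [h, Finset.mem_filter] at h1
        exact absurd h1.2 (hex C hC)
      · refine le_trans (ih _ ?_ ?_) (le_max_right _ _)
        · obtain ⟨C, hC, hT⟩ := TDmin_exists 𝒞 (hne.mono hs)
          apply Nat.le_of_lt_succ
          refine lt_of_lt_of_le (Finset.card_lt_card ?_) hc
          refine (Finset.ssubset_iff_of_subset Finset.sdiff_subset).mpr ?_
          exact ⟨C, hC, by simp [Finset.mem_sdiff, Finset.mem_filter, hC, hT]⟩
        · intro C hC
          simp [hs hC, hex C hC]

theorem RTD_le_of {X : Type*} [DecidableEq X] (k : ℕ) (n : ℕ) :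
    ∀ 𝒞 : Finset (Finset X), 𝒞.card ≤ n →
    (∀ 𝒟 ⊆ 𝒞, 𝒟.Nonempty → TDmin 𝒟 ≤ k) → RTD 𝒞 ≤ k := by
  have h0 : TDmin (∅ : Finset (Finset X)) = 0 := by simp [TDmin]
  induction n with
  | zero =>
    intro 𝒞 hc _
    have : 𝒞 = ∅ := Finset.card_eq_zero.1 (by omega)
    subst this
    rw [RTD]
    simp [h0]
  | succ n ih =>
    intro 𝒞 hc hk
    rcases Finset.eq_empty_or_nonempty 𝒞 with he | hne
    · subst he
      rw [RTD]
      simp [h0]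
    rw [RTD]
    split_ifs with h
    · exact hk _ (Finset.Subset.refl _) hne
    · refine max_le (hk _ (Finset.Subset.refl _) hne) (ih _ ?_ ?_)
      · obtain ⟨C, hC, hT⟩ := TDmin_exists 𝒞 hne
        apply Nat.le_of_lt_succ
        refine lt_of_lt_of_le (Finset.card_lt_card ?_) hc
        refine (Finset.ssubset_iff_of_subset Finset.sdiff_subset).mpr ?_
        exact ⟨C, hC, by simp [Finset.mem_sdiff, Finset.mem_filter, hC, hT]⟩
      · intro 𝒟 hD
        exact hk 𝒟 (hD.trans Finset.sdiff_subset)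

theorem star_lower {V : Type*} [Fintype V] [DecidableEq V]
    (G : SimpleGraph V) (x : V) : deg G x ≤ RTD (Cstar G) := by
  let 𝒟 : Finset (Finset V) := (nbrFinset G x).powerset.image (fun Y => insert x Y)
  have hne : 𝒟.Nonempty := ⟨insert x ∅, Finset.mem_image.2 ⟨∅, by simp, rfl⟩⟩
  have hx : x ∉ nbrFinset G x := by simp [nbrFinset]
  refine le_trans ?_ (sub_TDmin_le_RTD 𝒟 hne _ (Cstar G) le_rfl ?_)
  · obtain ⟨C, hC, hT⟩ := TDmin_exists 𝒟 hne
    obtain ⟨D, hD, hDc⟩ := TD_exists 𝒟 C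
    rw [← hT, ← hDc]
    change (nbrFinset G x).card ≤ _
    apply Finset.card_le_card
    intro y hy
    by_contra hyD
    obtain ⟨Y, hY, rfl⟩ := Finset.mem_image.1 hC
    rw [Finset.mem_powerset] at hY
    have hyx : y ≠ x := fun h => hx (h ▸ hy)
    by_cases hyY : y ∈ Y
    · obtain ⟨z, hz, hz'⟩ := hD (insert x (Y.erase y))
        (Finset.mem_image.2 ⟨Y.erase y, Finset.mem_powerset.2
          ((Finset.erase_subset _ _).trans hY), rfl⟩)
        (fun h => by
          have : y ∈ insert x (Y.erase y) := by rw [h]; simp [hyY]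
          simp [hyx] at this)
      have : z ≠ y := fun h => hyD (h ▸ hz)
      simp [this] at hz'
    · obtain ⟨z, hz, hz'⟩ := hD (insert x (insert y Y))
        (Finset.mem_image.2 ⟨insert y Y, Finset.mem_powerset.2
          (Finset.insert_subset hy hY), rfl⟩)
        (fun h => by
          have : y ∈ insert x Y := by rw [← h]; simp
          simp [hyx, hyY] at this)
      have : z ≠ y := fun h => hyD (h ▸ hz)
      simp [this] at hz'
  · intro C hC
    obtain ⟨Y, hY, rfl⟩ := Finset.mem_image.1 hC
    simp only [Cstar, Finset.mem_filter, Finset.mem_univ, true_and]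
    exact ⟨x, Y, Finset.mem_powerset.1 hY, rfl⟩

theorem star_upper {V : Type*} [Fintype V] [DecidableEq V]
    (G : SimpleGraph V) : RTD (Cstar G) ≤ maxDeg G + 1 := by
  refine RTD_le_of _ _ (Cstar G) le_rfl ?_
  intro 𝒟 hD hne
  obtain ⟨C, hC, hmax⟩ := Finset.exists_max_image 𝒟 Finset.card hne
  have hs := hD hC
  simp only [Cstar, Finset.mem_filter, Finset.mem_univ, true_and] at hs
  obtain ⟨x, Y, hY, hCe⟩ := hs
  have hsub : C ⊆ closedNbr G x := by
    rw [hCe]; exact Finset.insert_subset_insert _ hY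
  have ht : IsTeachingSet 𝒟 C (closedNbr G x) := by
    intro C' hC' hn
    by_contra h
    push Not at h
    have h1 : C ⊆ C' := fun z hz => (h z (hsub hz)).2 hz
    exact hn (Finset.eq_of_subset_of_card_le h1 (hmax C' hC')).symm
  refine (TDmin_le 𝒟 C hC).trans ((TD_le _ _ _ ht).trans ?_)
  refine (Finset.card_insert_le _ _).trans (Nat.add_le_add_right ?_ 1)
  exact Finset.le_sup (f := deg G) (Finset.mem_univ x)

/-- For every finite simple graph with at least one vertex,
`Δ(G) ≤ RTD(C_star(G)) ≤ Δ(G) + 1`. -/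
theorem star_rtd_bounds {V : Type*} [Fintype V] [DecidableEq V] [Nonempty V]
    (G : SimpleGraph V) :
    maxDeg G ≤ RTD (Cstar G) ∧ RTD (Cstar G) ≤ maxDeg G + 1 :=  by
  exact ⟨Finset.sup_le fun x _ => star_lower G x, star_upper G⟩
end

section
/- Let G = (V,E) be a finite simple graph with at least one vertex, let V_max be the set of vertices of maximum degree Δ(G), and partition V_max into equivalence classes V_1,…,V_m under the relation x ≡ y iff N_G(x) = N_G(y). For i = 1,…,m let N_i denote the common closed neighborhood of the vertices in V_i and set V'_i = N_i \ V_i. Then VCD(C_star(G)) = Δ(G) + 1 if and only if there exist an index i ∈ {1,…,m} and a vertex v ∉ N_i such that V'_i ⊆ N_G(v). -/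
open scoped Classical

open scoped Classical in
theorem mem_Cstar_iff {V : Type*} [Fintype V] [DecidableEq V] (G : SimpleGraph V) (C : Finset V) :
    C ∈ Cstar G ↔ ∃ x ∈ C, C ⊆ closedNbr G x := by
  unfold Cstar closedNbr
  simp only [Finset.mem_filter, Finset.mem_univ, true_and]
  constructor
  · rintro ⟨x, Y, hY, rfl⟩
    exact ⟨x, Finset.mem_insert_self _ _, Finset.insert_subset_insert _ hY⟩
  · rintro ⟨x, hx, hC⟩
    refine ⟨x, C.erase x, ?_, (Finset.insert_erase hx).symm⟩
    intro y hy
    have h1 := hC (Finset.mem_of_mem_erase hy)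
    have h2 := Finset.ne_of_mem_erase hy
    exact (Finset.mem_insert.1 h1).resolve_left h2

theorem mem_closedNbr_iff {V : Type*} [Fintype V] [DecidableEq V] (G : SimpleGraph V) (x y : V) :
    y ∈ closedNbr G x ↔ y = x ∨ G.Adj x y := by
  simp [closedNbr, nbrFinset]

theorem mem_closedNbr_comm {V : Type*} [Fintype V] [DecidableEq V] (G : SimpleGraph V) (x y : V) :
    y ∈ closedNbr G x ↔ x ∈ closedNbr G y := by
  rw [mem_closedNbr_iff, mem_closedNbr_iff, G.adj_comm, eq_comm]

theorem card_closedNbr {V : Type*} [Fintype V] [DecidableEq V] (G : SimpleGraph V) (x : V) :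
    (closedNbr G x).card = deg G x + 1 := by
  unfold closedNbr
  rw [Finset.card_insert_of_notMem (by simp [nbrFinset])]
  rfl

theorem deg_le_maxDeg' {V : Type*} [Fintype V] (G : SimpleGraph V) (x : V) :
    deg G x ≤ maxDeg G := Finset.le_sup (f := deg G) (Finset.mem_univ x)

theorem shatters_sub {V : Type*} [Fintype V] [DecidableEq V] (G : SimpleGraph V) (S : Finset V)
    (h : Shatters (Cstar G) S) : ∃ x, S ⊆ closedNbr G x := by
  obtain ⟨C, hC, hS⟩ := h S subset_rfl
  obtain ⟨x, -, hx⟩ := (mem_Cstar_iff G C).1 hC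
  exact ⟨x, (Finset.inter_eq_right.1 hS).trans hx⟩

theorem vcd_iff {V : Type*} [Fintype V] [DecidableEq V] [Nonempty V] (G : SimpleGraph V) :
    VCD (Cstar G) = maxDeg G + 1 ↔
      ∃ x, deg G x = maxDeg G ∧ Shatters (Cstar G) (closedNbr G x) := by
  have hub : ∀ n ∈ {n | ∃ S : Finset V, Shatters (Cstar G) S ∧ S.card = n},
      n ≤ maxDeg G + 1 := by
    rintro n ⟨S, hS, rfl⟩
    obtain ⟨x, hx⟩ := shatters_sub G S hS
    have h1 := Finset.card_le_card hx
    rw [card_closedNbr] at h1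
    have := deg_le_maxDeg' G x
    omega
  have hne : {n | ∃ S : Finset V, Shatters (Cstar G) S ∧ S.card = n}.Nonempty := by
    obtain ⟨v⟩ := ‹Nonempty V›
    refine ⟨0, ∅, ?_, rfl⟩
    intro S' hS'
    refine ⟨{v}, (mem_Cstar_iff G _).2 ⟨v, by simp, by simp [closedNbr]⟩, ?_⟩
    rw [Finset.subset_empty.1 hS']; simp
  unfold VCD
  constructor
  · intro h
    have hm := Nat.sSup_mem hne ⟨_, hub⟩
    rw [h] at hm
    obtain ⟨S, hS, hc⟩ := hm
    obtain ⟨x, hx⟩ := shatters_sub G S hS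
    have h1 := card_closedNbr G x
    have h2 := deg_le_maxDeg' G x
    have h3 := Finset.card_le_card hx
    have h4 := Finset.eq_of_subset_of_card_le hx (by omega)
    exact ⟨x, by omega, h4 ▸ hS⟩
  · rintro ⟨x, hd, hS⟩
    refine le_antisymm (csSup_le hne hub) (le_csSup ⟨_, hub⟩ ⟨_, hS, ?_⟩)
    rw [card_closedNbr, hd]

/-- `VCD(C_star(G)) = Δ(G) + 1` iff there is a vertex `x` of maximum
degree (a representative of one of the equivalence classes `V_1, …, V_m` of vertices of
maximum degree under equality of closed neighborhoods, so that `N_i = N_G(x)` and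
`V_i = {y of max degree | N_G(y) = N_G(x)}` and `V'_i = N_i \ V_i`) and a vertex
`v ∉ N_i` with `V'_i ⊆ N_G(v)`. -/
theorem star_vcd_exact {V : Type*} [Fintype V] [DecidableEq V] [Nonempty V]
    (G : SimpleGraph V) :
    VCD (Cstar G) = maxDeg G + 1 ↔
      ∃ x : V, deg G x = maxDeg G ∧ ∃ v : V, v ∉ closedNbr G x ∧
        closedNbr G x \
            (Finset.univ.filter (fun y => deg G y = maxDeg G ∧ closedNbr G y = closedNbr G x))
          ⊆ closedNbr G v := by
  rw [vcd_iff]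
  refine exists_congr fun x => and_congr_right fun hd => ?_
  constructor
  · intro h
    obtain ⟨C, hC, hCe⟩ := h _ (Finset.sdiff_subset (s := closedNbr G x)
      (t := Finset.univ.filter
        (fun y => deg G y = maxDeg G ∧ closedNbr G y = closedNbr G x)))
    obtain ⟨c, hc, hcC⟩ := (mem_Cstar_iff G C).1 hC
    have hsub := (hCe ▸ Finset.inter_subset_left).trans hcC
    refine ⟨c, fun hcN => ?_, hsub⟩
    have hcV := hCe ▸ Finset.mem_inter.2 ⟨hc, hcN⟩
    apply (Finset.mem_sdiff.1 hcV).2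
    have hNN : closedNbr G x ⊆ closedNbr G c := by
      intro y hy
      by_cases hyV : y ∈ Finset.univ.filter
        (fun y => deg G y = maxDeg G ∧ closedNbr G y = closedNbr G x)
      · rw [mem_closedNbr_comm, (Finset.mem_filter.1 hyV).2.2]
        exact hcN
      · exact hsub (Finset.mem_sdiff.2 ⟨hy, hyV⟩)
    have h1 := card_closedNbr G x
    have h2 := card_closedNbr G c
    have h3 := deg_le_maxDeg' G c
    have h4 := Finset.eq_of_subset_of_card_le hNN (by omega)
    rw [← h4] at h2
    exact Finset.mem_filter.2 ⟨Finset.mem_univ _, by omega, h4.symm⟩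
  · rintro ⟨v, hv, hsub⟩ S hS
    by_cases hy : ∃ y ∈ S, closedNbr G y = closedNbr G x
    · obtain ⟨y, hyS, hyN⟩ := hy
      exact ⟨S, (mem_Cstar_iff G S).2 ⟨y, hyS, hyN ▸ hS⟩, Finset.inter_eq_left.2 hS⟩
    · push Not at hy
      refine ⟨insert v S, (mem_Cstar_iff G _).2 ⟨v, Finset.mem_insert_self _ _, ?_⟩, ?_⟩
      · refine Finset.insert_subset (Finset.mem_insert_self _ _) fun y hyS => hsub ?_
        refine Finset.mem_sdiff.2 ⟨hS hyS, fun hm => hy y hyS (Finset.mem_filter.1 hm).2.2⟩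
      · rw [Finset.insert_inter_of_notMem hv]
        exact Finset.inter_eq_left.2 hS
end

section
/- For every finite simple graph G = (V,E) with at least one vertex, RTD(C_star(G)) ≤ VCD(C_star(G)). -/
open scoped Classical

theorem TD_le_of_teach {X : Type*} [DecidableEq X] (F : Finset (Finset X)) (C D : Finset X)
    (h : IsTeachingSet F C D) : TD F C ≤ D.card :=
  Nat.sInf_le ⟨D, h, rfl⟩

theorem RTD_le_of_forall {X : Type*} [DecidableEq X] (d : ℕ) (n : ℕ) :
    ∀ F : Finset (Finset X), F.card ≤ n →
      (∀ F' ⊆ F, F'.Nonempty → ∃ C ∈ F', TD F' C ≤ d) → RTD F ≤ d := by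
  induction n with
  | zero =>
    intro F hF _
    have : F = ∅ := Finset.card_eq_zero.mp (by omega)
    subst this
    rw [RTD]
    simp [TDmin]
  | succ n ih =>
    intro F hF h
    rcases Finset.eq_empty_or_nonempty F with he | hne
    · subst he
      rw [RTD]
      simp [TDmin]
    have hmin : TDmin F ≤ d := by
      obtain ⟨C, hC, hd⟩ := h F (Finset.Subset.refl _) hne
      exact le_trans (Nat.sInf_le ⟨C, hC, rfl⟩) hd
    rw [RTD]
    split_ifs with hh
    · exact hmin
    · refine max_le hmin (ih _ ?_ ?_)
      · obtain ⟨C₀, hC₀⟩ := hne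
        have hmem : TDmin F ∈ {n | ∃ C ∈ F, TD F C = n} :=
          Nat.sInf_mem ⟨TD F C₀, C₀, hC₀, rfl⟩
        obtain ⟨C, hC, hTD⟩ := hmem
        have : (F \ F.filter (fun C => TD F C = TDmin F)).card < F.card := by
          refine Finset.card_lt_card ?_
          refine (Finset.ssubset_iff_of_subset Finset.sdiff_subset).mpr ?_
          exact ⟨C, hC, by simp [Finset.mem_sdiff, Finset.mem_filter, hC, hTD]⟩
        omega
      · intro F' hF'
        exact h F' (hF'.trans Finset.sdiff_subset)

theorem card_le_VCD {X : Type*} [Fintype X] [DecidableEq X] (F : Finset (Finset X))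
    (S : Finset X) (h : Shatters F S) : S.card ≤ VCD F := by
  refine le_csSup ⟨Fintype.card X, ?_⟩ ⟨S, h, rfl⟩
  rintro n ⟨S, _, rfl⟩
  exact Finset.card_le_univ S

section star
variable {V : Type*} [Fintype V] [DecidableEq V] (G : SimpleGraph V)

theorem mem_cn (x y : V) : y ∈ closedNbr G x ↔ y = x ∨ G.Adj x y := by
  simp [closedNbr, nbrFinset]

theorem self_mem_cn (x : V) : x ∈ closedNbr G x := by
  simp [mem_cn]

theorem mem_star (C : Finset V) : C ∈ Cstar G ↔ ∃ x ∈ C, C ⊆ closedNbr G x := by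
  simp only [Cstar, Finset.mem_filter, Finset.mem_univ, true_and]
  constructor
  · rintro ⟨x, Y, hY, rfl⟩
    exact ⟨x, by simp, Finset.insert_subset_insert _ hY⟩
  · rintro ⟨x, hx, hC⟩
    refine ⟨x, C.erase x, ?_, (Finset.insert_erase hx).symm⟩
    intro y hy
    have := hC (Finset.mem_of_mem_erase hy)
    have h2 := Finset.ne_of_mem_erase hy
    simp only [closedNbr, Finset.mem_insert] at this
    tauto

theorem nbr_shatters (x : V) : Shatters (Cstar G) (nbrFinset G x) := by
  intro S hS
  refine ⟨insert x S, (mem_star G _).2 ⟨x, by simp, Finset.insert_subset_insert _ hS⟩, ?_⟩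
  have hx : x ∉ nbrFinset G x := by simp [nbrFinset]
  rw [Finset.insert_inter_of_notMem hx]
  exact Finset.inter_eq_left.2 hS

theorem cn_card_le (x : V) : (closedNbr G x).card ≤ VCD (Cstar G) + 1 := by
  have h1 := card_le_VCD _ _ (nbr_shatters G x)
  have h2 := Finset.card_insert_le x (nbrFinset G x)
  unfold closedNbr
  omega

/-- `X` is a subset of `N(x)` witnessing that `N(x)` is not shattered. -/
def NonTr (x : V) (X : Finset V) : Prop :=
  X ⊆ closedNbr G x ∧ ∀ y, X ⊆ closedNbr G y → y ∈ closedNbr G x ∧ y ∉ X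

theorem exists_nonTr (x : V) (h : VCD (Cstar G) < (closedNbr G x).card) :
    ∃ X, NonTr G x X := by
  by_contra hno
  have : Shatters (Cstar G) (closedNbr G x) := by
    intro X hX
    have : ¬ NonTr G x X := fun h => hno ⟨X, h⟩
    simp only [NonTr, not_and, not_forall] at this
    obtain ⟨y, hy, hy2⟩ := this hX
    refine ⟨insert y X, (mem_star G _).2 ⟨y, by simp, ?_⟩, ?_⟩
    · exact Finset.insert_subset (self_mem_cn G y) hy
    · by_cases hyx : y ∈ closedNbr G x
      · have : y ∈ X := by simpa using hy2 hyx
        rw [Finset.insert_eq_of_mem this]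
        exact Finset.inter_eq_left.2 hX
      · rw [Finset.insert_inter_of_notMem hyx]
        exact Finset.inter_eq_left.2 hX
  have := card_le_VCD _ _ this
  omega

theorem star_key (F : Finset (Finset V)) (hF : F ⊆ Cstar G) (hne : F.Nonempty) :
    ∃ C ∈ F, TD F C ≤ VCD (Cstar G) := by
  by_contra! hbad
  -- every member of F is contained in a full closed neighborhood in F
  have hmax : ∀ M ∈ F, ∃ c, M ⊆ closedNbr G c ∧ closedNbr G c ∈ F ∧
      VCD (Cstar G) < (closedNbr G c).card := by
    intro M hM
    obtain ⟨M', hMM', hM'⟩ := Finset.exists_le_maximal F hM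
    have hcard : VCD (Cstar G) < M'.card := by
      refine lt_of_lt_of_le (hbad M' hM'.1) (TD_le_of_teach F M' M' ?_)
      intro C' hC' hne
      by_contra! hcon
      have hsub : M' ≤ C' := fun z hz => (hcon z hz).2 hz
      exact hne (le_antisymm (hM'.2 hC' hsub) hsub)
    obtain ⟨c, hc, hsub⟩ := (mem_star G M').1 (hF hM'.1)
    have : M' = closedNbr G c := by
      refine Finset.eq_of_subset_of_card_le hsub ?_
      have := cn_card_le G c
      omega
    subst this
    exact ⟨c, hMM', hM'.1, hcard⟩
  let P : Finset (V × Finset V) := Finset.univ.filter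
    (fun q => closedNbr G q.1 ∈ F ∧ VCD (Cstar G) < (closedNbr G q.1).card ∧ NonTr G q.1 q.2)
  have hP : P.Nonempty := by
    obtain ⟨M, hM⟩ := hne
    obtain ⟨c, _, h1, h2⟩ := hmax M hM
    obtain ⟨X, hX⟩ := exists_nonTr G c h2
    exact ⟨(c, X), by simp [P, h1, h2, hX]⟩
  obtain ⟨⟨x, X⟩, hxP, hxmax⟩ := Finset.exists_max_image P (fun q => q.2.card) hP
  simp only [P, Finset.mem_filter, Finset.mem_univ, true_and] at hxP
  obtain ⟨hxF, hxc, hX⟩ := hxP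
  have hle : ∀ c Y, closedNbr G c ∈ F → VCD (Cstar G) < (closedNbr G c).card →
      NonTr G c Y → Y.card ≤ X.card := by
    intro c Y h1 h2 h3
    exact hxmax (c, Y) (by simp [P, h1, h2, h3])
  -- structure
  have hstr : ∀ c, closedNbr G c ∈ F → VCD (Cstar G) < (closedNbr G c).card →
      NonTr G c X → ∀ u, u ∈ closedNbr G c ↔ (u ∈ X ∨ X ⊆ closedNbr G u) := by
    intro c h1 h2 h3 u
    constructor
    · intro hu
      by_contra! hcon
      have hn : NonTr G c (insert u X) := by
        refine ⟨Finset.insert_subset hu h3.1, fun y hy => ?_⟩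
        have hy' := (Finset.subset_insert u X).trans hy
        have := h3.2 y hy'
        refine ⟨this.1, ?_⟩
        rw [Finset.mem_insert]
        rintro (rfl | h)
        · exact hcon.2 hy'
        · exact this.2 h
      have := hle c _ h1 h2 hn
      rw [Finset.card_insert_of_notMem hcon.1] at this
      omega
    · rintro (h | h)
      · exact h3.1 h
      · exact (h3.2 u h).1
  -- uniqueness
  have huniq : ∀ c, closedNbr G c ∈ F → VCD (Cstar G) < (closedNbr G c).card →
      X ⊆ closedNbr G c → closedNbr G c = closedNbr G x := by
    intro c h1 h2 h3
    obtain ⟨Y, hY⟩ := exists_nonTr G c h2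
    have hn : NonTr G c (X ∪ Y) := by
      refine ⟨Finset.union_subset h3 hY.1, fun y hy => ?_⟩
      have a := hX.2 y (Finset.subset_union_left.trans hy)
      have b := hY.2 y (Finset.subset_union_right.trans hy)
      refine ⟨b.1, ?_⟩
      rw [Finset.mem_union]
      rintro (h | h)
      · exact a.2 h
      · exact b.2 h
    have heq : X = X ∪ Y :=
      Finset.eq_of_subset_of_card_le Finset.subset_union_left (hle c _ h1 h2 hn)
    rw [← heq] at hn
    ext u
    rw [hstr c h1 h2 hn, hstr x hxF hxc hX]
  let Q : Finset (Finset V) := F.filter (fun S => X ⊆ S ∧ S ⊆ closedNbr G x)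
  have hQ : Q.Nonempty := ⟨closedNbr G x, by simp [Q, hxF, hX.1]⟩
  obtain ⟨S, hSQ, hSmin⟩ := Finset.exists_min_image Q Finset.card hQ
  simp only [Q, Finset.mem_filter] at hSQ
  obtain ⟨hSF, hXS, hSx⟩ := hSQ
  have hp : ∃ p ∈ S, p ∉ X := by
    obtain ⟨y, hy, hS⟩ := (mem_star G S).1 (hF hSF)
    exact ⟨y, hy, (hX.2 y (hXS.trans hS)).2⟩
  obtain ⟨p, hpS, hpX⟩ := hp
  have hteach : IsTeachingSet F S ((closedNbr G x).erase p) := by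
    intro M hM hMS
    by_contra! hcon
    have hag : ∀ z ∈ closedNbr G x, z ≠ p → (z ∈ M ↔ z ∈ S) := by
      intro z hz hzp
      exact hcon z (Finset.mem_erase.2 ⟨hzp, hz⟩)
    have hXM : X ⊆ M := by
      intro z hz
      have hzp : z ≠ p := fun h => hpX (h ▸ hz)
      exact (hag z (hX.1 hz) hzp).2 (hXS hz)
    obtain ⟨c, hMc, h1, h2⟩ := hmax M hM
    rw [huniq c h1 h2 (hXM.trans hMc)] at hMc
    have hMS' : M ⊆ S := by
      intro z hz
      by_cases hzp : z = p
      · exact hzp ▸ hpS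
      · exact (hag z (hMc hz) hzp).1 hz
    have := hSmin M (by simp [Q, hM, hXM, hMc])
    exact hMS (Finset.eq_of_subset_of_card_le hMS' this)
  have h1 := TD_le_of_teach _ _ _ hteach
  rw [Finset.card_erase_of_mem (hSx hpS)] at h1
  have h2 := hbad S hSF
  have h3 := cn_card_le G x
  omega

end star

/-- For every finite simple graph with at least one vertex,
`RTD(C_star(G)) ≤ VCD(C_star(G))`. -/
theorem star_rtd_le_vcd {V : Type*} [Fintype V] [DecidableEq V] [Nonempty V]
    (G : SimpleGraph V) :
    RTD (Cstar G) ≤ VCD (Cstar G) :=  by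
  exact RTD_le_of_forall _ _ _ le_rfl (fun F hF hne => star_key G F hF hne)
end

section
/- For every finite tree T with at least two vertices, VCD(C_con(T)) = ℓ(T), where ℓ(T) is the number of leaves of T. -/
open scoped Classical

theorem leaf_unique {V : Type*} [Fintype V] {T : SimpleGraph V} {c a d : V}
    (h : IsLeaf T c) (ha : T.Adj c a) (hd : T.Adj c d) : a = d := by
  unfold IsLeaf deg at h
  obtain ⟨z, hz⟩ := Finset.card_eq_one.1 h
  have h1 : a ∈ ({z} : Finset V) := by rw [← hz]; simpa using ha
  have h2 : d ∈ ({z} : Finset V) := by rw [← hz]; simpa using hd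
  rw [Finset.mem_singleton] at h1 h2
  rw [h1, h2]

theorem path_tail_mem {V : Type*} [Fintype V] {T : SimpleGraph V} {C : Set V}
    (hC : ∀ v, v ∉ C → IsLeaf T v) {a b : V} (p : T.Walk a b) (hp : p.IsPath) (hb : b ∈ C) :
    ∀ x ∈ p.support.tail, x ∈ C := by
  induction p with
  | nil => simp
  | @cons a c b h p ih =>
    rw [SimpleGraph.Walk.cons_isPath_iff] at hp
    intro x hx
    rw [SimpleGraph.Walk.support_cons, List.tail_cons] at hx
    have ih' := ih hp.1 hb
    rw [SimpleGraph.Walk.mem_support_iff] at hx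
    rcases hx with rfl | hx
    · cases p with
      | nil => exact hb
      | @cons _ d _ h' p' =>
        by_contra hx
        have := leaf_unique (hC _ hx) h.symm h'
        subst this
        exact hp.2 (by simp)
    · exact ih' x hx

theorem shatters_leaves {V : Type*} [Fintype V] [DecidableEq V]
    (T : SimpleGraph V) (htree : T.IsTree) :
    Shatters (Ccon T) (Finset.univ.filter (fun v => IsLeaf T v)) := by
  intro S' hS'
  rcases S'.eq_empty_or_nonempty with rfl | ⟨s, hs⟩
  · exact ⟨∅, by simp [Ccon], by simp⟩
  · refine ⟨Finset.univ.filter (fun v => IsLeaf T v → v ∈ S'), ?_, ?_⟩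
    · simp only [Ccon, Finset.mem_filter, Finset.mem_univ, true_and]
      right
      unfold IsConnSet
      rw [SimpleGraph.connected_iff]
      refine ⟨?_, ⟨⟨s, by simp [hs]⟩⟩⟩
      rintro ⟨a, ha⟩ ⟨b, hb⟩
      obtain ⟨p, hp⟩ := (htree.connected a b).exists_isPath
      have key : ∀ x ∈ p.support,
          x ∈ ((Finset.univ.filter (fun v => IsLeaf T v → v ∈ S') : Finset V) : Set V) := by
        intro x hx
        rw [SimpleGraph.Walk.mem_support_iff] at hx
        rcases hx with rfl | hx
        · exact ha
        · refine path_tail_mem ?_ p hp hb x hx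
          intro v hv
          by_contra h
          exact hv (by simp [h])
      exact ⟨p.induce _ key⟩
    · ext x
      simp only [Finset.mem_inter, Finset.mem_filter, Finset.mem_univ, true_and]
      constructor
      · rintro ⟨h1, h2⟩; exact h1 h2
      · intro h
        have := hS' h
        simp at this
        exact ⟨fun _ => h, this⟩

theorem closer_unique {V : Type*} {T : SimpleGraph V} (htree : T.IsTree) {r x y z : V}
    (hy : T.Adj x y) (hz : T.Adj x z) (h1 : T.dist r x = T.dist r y + 1)
    (h2 : T.dist r x = T.dist r z + 1) : y = z := by
  obtain ⟨p, hp, hpl⟩ := htree.connected.exists_path_of_dist r y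
  obtain ⟨q, hq, hql⟩ := htree.connected.exists_path_of_dist r z
  have hp' : (p.concat hy.symm).IsPath :=
    SimpleGraph.Walk.isPath_of_length_eq_dist _ (by simp [hpl, h1])
  have hq' : (q.concat hz.symm).IsPath :=
    SimpleGraph.Walk.isPath_of_length_eq_dist _ (by simp [hql, h2])
  have := (htree.existsUnique_path r x).unique hp' hq'
  have h3 := congrArg SimpleGraph.Walk.penultimate this
  simpa using h3

theorem mem_of_dist {V : Type*} [DecidableEq V] {T : SimpleGraph V} (htree : T.IsTree) {r s x : V}
    (h : T.dist r x = T.dist r s + T.dist s x) (w : T.Walk r x) : s ∈ w.support := by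
  obtain ⟨p, hpl⟩ := htree.connected.exists_walk_length_eq_dist r s
  obtain ⟨q, hql⟩ := htree.connected.exists_walk_length_eq_dist s x
  have hp : (p.append q).IsPath :=
    SimpleGraph.Walk.isPath_of_length_eq_dist _ (by simp [hpl, hql, h])
  have := (htree.existsUnique_path r x).unique hp w.bypass_isPath
  apply w.support_bypass_subset_support
  rw [← this]
  simp

theorem exists_far_leaf {V : Type*} [Fintype V] [DecidableEq V] {T : SimpleGraph V}
    (htree : T.IsTree) {r s : V} (hrs : r ≠ s) :
    ∃ x, IsLeaf T x ∧ T.dist r x = T.dist r s + T.dist s x := by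
  obtain ⟨x, hx, hmax⟩ := Finset.exists_max_image
    (Finset.univ.filter (fun x => T.dist r x = T.dist r s + T.dist s x)) (fun x => T.dist r x)
    ⟨s, by simp⟩
  simp only [Finset.mem_filter, Finset.mem_univ, true_and] at hx hmax
  have hpos : 0 < T.dist r s := htree.connected.pos_dist_of_ne hrs
  have hcl : ∀ y, T.Adj x y → T.dist r x = T.dist r y + 1 := by
    intro y hy
    rcases htree.dist_eq_dist_add_one_of_adj r hy with h | h
    · exact h
    · exfalso
      have h1 : T.dist s y ≤ T.dist s x + T.dist x y := htree.connected.dist_triangle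
      have h2 : T.dist r y ≤ T.dist r s + T.dist s y := htree.connected.dist_triangle
      have h3 : T.dist x y = 1 := SimpleGraph.dist_eq_one_iff_adj.2 hy
      have := hmax y (by omega)
      omega
  refine ⟨x, ?_, hx⟩
  have hne : x ≠ r := by
    rintro rfl
    simp at hx
    omega
  obtain ⟨w⟩ := htree.connected x r
  have hadj : ∃ y, T.Adj x y := by
    cases w with
    | nil => exact absurd rfl hne
    | cons h _ => exact ⟨_, h⟩
  obtain ⟨y, hy⟩ := hadj
  unfold IsLeaf deg
  rw [Finset.card_eq_one]
  refine ⟨y, ?_⟩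
  ext z
  simp only [Finset.mem_filter, Finset.mem_univ, true_and, Finset.mem_singleton]
  constructor
  · intro hz
    exact closer_unique htree hz hy (hcl z hz) (hcl y hy)
  · rintro rfl; exact hy

theorem exists_private_leaf {V : Type*} [Fintype V] [DecidableEq V] {T : SimpleGraph V}
    (htree : T.IsTree) {S : Finset V} (hS : Shatters (Ccon T) S) (h2 : 1 < S.card) {s : V}
    (hs : s ∈ S) :
    ∃ x, IsLeaf T x ∧ ∀ s' ∈ S, s' ≠ s → T.dist x s < T.dist x s' := by
  obtain ⟨r, hr, hrs⟩ := Finset.exists_mem_ne h2 s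
  obtain ⟨x, hx, hd⟩ := exists_far_leaf htree hrs
  refine ⟨x, hx, fun s' hs' hne => ?_⟩
  obtain ⟨C, hC, hCS⟩ := hS (S.erase s) (Finset.erase_subset _ _)
  have hrC : r ∈ C := (Finset.mem_inter.1 (hCS ▸ Finset.mem_erase.2 ⟨hrs, hr⟩)).1
  have hsC' : s' ∈ C := (Finset.mem_inter.1 (hCS ▸ Finset.mem_erase.2 ⟨hne, hs'⟩)).1
  have hsC : s ∉ C := fun h => by
    have : s ∈ C ∩ S := Finset.mem_inter.2 ⟨h, hs⟩
    rw [hCS] at this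
    simp at this
  simp only [Ccon, Finset.mem_filter, Finset.mem_univ, true_and] at hC
  rcases hC with rfl | hC
  · simp at hrC
  obtain ⟨w⟩ := hC.preconnected ⟨r, hrC⟩ ⟨s', hsC'⟩
  obtain ⟨w2, hw2⟩ := htree.connected.exists_walk_length_eq_dist s' x
  let w1 : T.Walk r s' := w.map (SimpleGraph.Embedding.induce (C : Set V)).toHom
  have hw1 : s ∉ w1.support := by
    intro h
    have h' := List.mem_map.1 ((congrArg (fun l => s ∈ l) (SimpleGraph.Walk.support_map
      (SimpleGraph.Embedding.induce (C : Set V)).toHom w)).mp h)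
    obtain ⟨⟨v, hv⟩, -, rfl⟩ := h'
    exact hsC hv
  have hm := mem_of_dist htree hd (w1.append w2)
  rw [SimpleGraph.Walk.mem_support_append_iff] at hm
  have hm2 := hm.resolve_left hw1
  have hl := congrArg SimpleGraph.Walk.length (w2.take_spec hm2)
  rw [SimpleGraph.Walk.length_append] at hl
  have h3 := SimpleGraph.dist_le (w2.takeUntil s hm2)
  have h4 := SimpleGraph.dist_le (w2.dropUntil s hm2)
  have h5 : 0 < T.dist s' s := htree.connected.pos_dist_of_ne hne
  rw [T.dist_comm (u := x) (v := s), T.dist_comm (u := x) (v := s')]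
  omega

theorem card_le_leaves {V : Type*} [Fintype V] [DecidableEq V] {T : SimpleGraph V}
    (htree : T.IsTree) (hcard : 2 ≤ Fintype.card V) {S : Finset V} (hS : Shatters (Ccon T) S) :
    S.card ≤ leafCount T := by
  by_cases h2 : 1 < S.card
  · choose! f hf using fun s (hs : s ∈ S) => exists_private_leaf htree hS h2 hs
    refine Finset.card_le_card_of_injOn f ?_ ?_
    · intro s hs
      simpa using (hf s hs).1
    · intro a ha b hb hab
      by_contra hne
      have h1 := (hf a ha).2 b hb (Ne.symm hne)
      have h3 := (hf b hb).2 a ha hne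
      rw [hab] at h1
      omega
  · obtain ⟨r, s, hrs⟩ := Fintype.exists_pair_of_one_lt_card (show 1 < Fintype.card V by omega)
    obtain ⟨x, hx, -⟩ := exists_far_leaf htree hrs
    have : 0 < leafCount T := Finset.card_pos.2 ⟨x, by simpa using hx⟩
    omega

/-- For every finite tree `T` with at least two vertices,
`VCD(C_con(T)) = ℓ(T)`, the number of leaves of `T`. -/
theorem con_vcd_tree {V : Type*} [Fintype V] [DecidableEq V]
    (T : SimpleGraph V) (htree : T.IsTree) (hcard : 2 ≤ Fintype.card V) :
    VCD (Ccon T) = leafCount T := by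
  apply le_antisymm
  · refine csSup_le ⟨leafCount T, _, shatters_leaves T htree, rfl⟩ ?_
    rintro n ⟨S, hS, rfl⟩
    exact card_le_leaves htree hcard hS
  · refine le_csSup ⟨leafCount T, ?_⟩ ⟨_, shatters_leaves T htree, rfl⟩
    rintro n ⟨S, hS, rfl⟩
    exact card_le_leaves htree hcard hS
end

section
/- For every connected finite simple graph G with at least two vertices, ℓ(G) ≤ VCD(C_con(G)) ≤ ℓ(G) + 1. -/
open scoped Classical

namespace ConVcd

variable {V : Type*} [Fintype V] [DecidableEq V]

lemma exit_edge {V : Type*} {G : SimpleGraph V} {C A : Set V} (hC : (G.induce C).Connected)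
    {u b : V} (huC : u ∈ C) (huA : u ∈ A) (hbC : b ∈ C) (hbA : b ∉ A) :
    ∃ x y, x ∈ A ∧ y ∈ C ∧ y ∉ A ∧ G.Adj x y := by
  obtain ⟨p⟩ := hC.preconnected ⟨u, huC⟩ ⟨b, hbC⟩
  obtain ⟨d, -, h1, h2⟩ := p.exists_boundary_dart (Subtype.val ⁻¹' A) huA hbA
  exact ⟨d.fst.1, d.snd.1, h1, d.snd.2, h2, d.adj⟩

lemma conn_insert {G : SimpleGraph V} {A : Finset V} (hA : IsConnSet G A) {x y : V}
    (hx : x ∈ A) (h : G.Adj x y) : IsConnSet G (insert y A) := by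
  have h1 : (G.induce ((A : Set V) ∪ {y})).Connected :=
    SimpleGraph.connected_induce_union hA.preconnected
      (SimpleGraph.Preconnected.of_subsingleton) (v := x) (w := y) (by simpa using hx) (by simp) h
  unfold IsConnSet
  rw [Finset.coe_insert, Set.insert_eq, Set.union_comm]
  exact h1

noncomputable def bd (G : SimpleGraph V) (A : Finset V) : Finset V :=
  Finset.univ.filter (fun v => v ∉ A ∧ ∃ a ∈ A, G.Adj a v)

lemma exists_max (P : Finset V → Prop) (A : Finset V) (hA : P A) :
    ∃ B, P B ∧ ∀ C, P C → C.card ≤ B.card := by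
  obtain ⟨B, hB, hm⟩ := Finset.exists_max_image (Finset.univ.filter P) Finset.card
    ⟨A, by simpa using hA⟩
  exact ⟨B, by simpa using hB, fun C hC => hm C (by simpa using hC)⟩

lemma grow {G : SimpleGraph V} (hG : G.Connected) {k : ℕ} (A : Finset V) (hA : IsConnSet G A)
    (hk : k ≤ (bd G A).card) :
    ∃ B : Finset V, IsConnSet G B ∧ k ≤ Bᶜ.card ∧ ∀ v ∉ B, ∃ a ∈ B, G.Adj v a := by
  obtain ⟨B, ⟨hB, hBk⟩, hm⟩ := exists_max (fun A => IsConnSet G A ∧ k ≤ (bd G A).card) A ⟨hA, hk⟩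
  have hdom : ∀ v, v ∉ B → v ∈ bd G B := by
    by_contra! hcon
    obtain ⟨w, hwB, hw⟩ := hcon
    obtain ⟨⟨u, hu⟩⟩ := hB.nonempty
    have huB : u ∈ B := by simpa using hu
    obtain ⟨p⟩ := hG.preconnected u w
    obtain ⟨d, -, h1, h2⟩ := p.exists_boundary_dart ((B ∪ bd G B : Finset V) : Set V)
      (by simp [huB]) (by simp [hwB, hw])
    have hadj := d.adj
    generalize d.fst = x at *
    generalize d.snd = y at *
    simp only [Finset.coe_union, Set.mem_union, Finset.mem_coe, not_or] at h1 h2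
    have hxB : x ∉ B := by
      intro hx
      exact h2.2 (by simp only [bd, Finset.mem_filter, Finset.mem_univ, true_and]
                     exact ⟨h2.1, x, hx, hadj⟩)
    have hxb : x ∈ bd G B := h1.resolve_left hxB
    obtain ⟨-, a, ha, hax⟩ := (Finset.mem_filter.mp hxb).2
    have hsub : insert y ((bd G B).erase x) ⊆ bd G (insert x B) := by
      intro z hz
      simp only [Finset.mem_insert, Finset.mem_erase] at hz
      simp only [bd, Finset.mem_filter, Finset.mem_univ, true_and, Finset.mem_insert, not_or]
      rcases hz with rfl | ⟨hzx, hz⟩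
      · exact ⟨⟨hadj.ne', h2.1⟩, x, Or.inl rfl, hadj⟩
      · obtain ⟨hz1, a, ha, haz⟩ := (Finset.mem_filter.mp hz).2
        exact ⟨⟨hzx, hz1⟩, a, Or.inr ha, haz⟩
    have hc := Finset.card_le_card hsub
    rw [Finset.card_insert_of_notMem (by simp [h2.2]), Finset.card_erase_add_one hxb] at hc
    have := hm (insert x B) ⟨conn_insert hB ha hax, hBk.trans hc⟩
    rw [Finset.card_insert_of_notMem hxB] at this
    omega
  refine ⟨B, hB, hBk.trans (Finset.card_le_card ?_), ?_⟩
  · intro v hv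
    simpa using (Finset.mem_filter.mp hv).2.1
  · intro v hv
    obtain ⟨-, a, ha, hav⟩ := (Finset.mem_filter.mp (hdom v hv)).2
    exact ⟨a, ha, hav.symm⟩

lemma isLeaf_iff (T : SimpleGraph V) (v : V) : IsLeaf T v ↔ ∃ w, ∀ z, T.Adj v z ↔ z = w := by
  simp [IsLeaf, deg, Finset.card_eq_one, Finset.ext_iff]

lemma bdd_ell (G : SimpleGraph V) :
    BddAbove {k | ∃ T : SimpleGraph V, T ≤ G ∧ T.IsTree ∧ leafCount T = k} := by
  refine ⟨Fintype.card V, ?_⟩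
  rintro k ⟨T, -, -, rfl⟩
  exact Finset.card_le_univ _

lemma bdd_vcd (𝒞 : Finset (Finset V)) :
    BddAbove {n | ∃ S : Finset V, Shatters 𝒞 S ∧ S.card = n} := by
  refine ⟨Fintype.card V, ?_⟩
  rintro k ⟨T, -, rfl⟩
  exact Finset.card_le_univ _

lemma tree_of_dom {G : SimpleGraph V} (hcard : 2 ≤ Fintype.card V) {B : Finset V}
    (hB : IsConnSet G B) (hdom : ∀ v ∉ B, ∃ a ∈ B, G.Adj v a) : Bᶜ.card ≤ ell G := by
  have : Nontrivial V := Fintype.one_lt_card_iff_nontrivial.mp hcard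
  choose! f hfB hf using hdom
  let H : SimpleGraph V :=
    { Adj := fun x y => G.Adj x y ∧ ((x ∈ B ∧ y ∈ B) ∨ (x ∉ B ∧ y = f x) ∨ (y ∉ B ∧ x = f y))
      symm := ⟨fun x y h => ⟨h.1.symm, by tauto⟩⟩
      loopless := ⟨fun x h => h.1.ne rfl⟩ }
  have hHG : H ≤ G := fun x y h => h.1
  obtain ⟨⟨u, hu⟩⟩ := hB.nonempty
  have huB : u ∈ B := by simpa using hu
  have hreach : ∀ v, v ∈ B → H.Reachable u v := by
    intro v hv
    let φ : G.induce (B : Set V) →g H :=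
      { toFun := Subtype.val
        map_rel' := fun {a b} h => ⟨h, Or.inl ⟨by simpa using a.2, by simpa using b.2⟩⟩ }
    exact (hB.preconnected ⟨u, hu⟩ ⟨v, by simpa using hv⟩).map φ
  have hreach2 : ∀ v, H.Reachable u v := by
    intro v
    by_cases hv : v ∈ B
    · exact hreach v hv
    · refine (hreach (f v) (hfB v hv)).trans (SimpleGraph.Adj.reachable ?_)
      exact ⟨(hf v hv).symm, Or.inr (Or.inr ⟨hv, rfl⟩)⟩
  have hHc : H.Connected := SimpleGraph.connected_iff_exists_forall_reachable _ |>.mpr ⟨u, hreach2⟩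
  obtain ⟨T, hTH, hT⟩ := hHc.exists_isTree_le
  have hle : Bᶜ.card ≤ leafCount T := by
    apply Finset.card_le_card
    intro v hv
    have hv : v ∉ B := by simpa using hv
    simp only [Finset.mem_filter, Finset.mem_univ, true_and]
    rw [isLeaf_iff]
    have hon : ∀ z, T.Adj v z → z = f v := by
      intro z hz
      obtain ⟨-, h | h | h⟩ := hTH hz
      · exact absurd h.1 hv
      · exact h.2
      · exact absurd (h.2 ▸ hfB z h.1) hv
    obtain ⟨w, hw⟩ : ∃ w, T.Adj v w := by
      have := hT.connected.preconnected.degree_pos_of_nontrivial v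
      rwa [SimpleGraph.degree_pos_iff_exists_adj] at this
    refine ⟨f v, fun z => ⟨hon z, ?_⟩⟩
    rintro rfl
    exact hon w hw ▸ hw
  exact hle.trans (le_csSup (bdd_ell G) ⟨T, hTH.trans hHG, hT, rfl⟩)

lemma upper {G : SimpleGraph V} (hG : G.Connected) (hcard : 2 ≤ Fintype.card V) (S : Finset V)
    (hS : Shatters (Ccon G) S) : S.card ≤ ell G + 1 := by
  rcases S.eq_empty_or_nonempty with rfl | ⟨u, hu⟩
  · simp
  have h0 : IsConnSet G {u} ∧ ({u} : Finset V) ∩ S = {u} := by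
    refine ⟨?_, by simpa using hu⟩
    unfold IsConnSet
    rw [Finset.coe_singleton]
    exact ⟨SimpleGraph.Preconnected.of_subsingleton⟩
  obtain ⟨A, ⟨hA, hAS⟩, hm⟩ := exists_max (fun A => IsConnSet G A ∧ A ∩ S = {u}) _ h0
  have huA : u ∈ A := (Finset.mem_inter.mp (hAS ▸ Finset.mem_singleton_self u)).1
  have hsub : S.erase u ⊆ bd G A := by
    intro b hb
    obtain ⟨hbu, hbS⟩ := Finset.mem_erase.mp hb
    have hbA : b ∉ A := by
      intro h
      have : b ∈ A ∩ S := Finset.mem_inter.mpr ⟨h, hbS⟩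
      rw [hAS] at this
      exact hbu (by simpa using this)
    obtain ⟨C, hC, hCS⟩ := hS {u, b} (by simp [Finset.insert_subset_iff, hu, hbS])
    have huC : u ∈ C := (Finset.mem_inter.mp (hCS ▸ by simp : u ∈ C ∩ S)).1
    have hbC : b ∈ C := (Finset.mem_inter.mp (hCS ▸ by simp : b ∈ C ∩ S)).1
    have hCc : IsConnSet G C := by
      rcases (Finset.mem_filter.mp hC).2 with h | h
      · simp [h] at huC
      · exact h
    obtain ⟨x, y, hx, hyC, hyA, hxy⟩ := exit_edge (A := (A : Set V)) hCc
      (by simpa using huC) (by simpa using huA) (by simpa using hbC) (by simpa using hbA)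
    simp only [Finset.mem_coe] at hx hyC hyA
    have hyS : y ∈ S := by
      by_contra hyS
      have := hm (insert y A) ⟨conn_insert hA hx hxy, by
        rw [Finset.insert_inter_of_notMem hyS, hAS]⟩
      rw [Finset.card_insert_of_notMem hyA] at this
      omega
    have hy : y ∈ C ∩ S := Finset.mem_inter.mpr ⟨hyC, hyS⟩
    rw [hCS] at hy
    simp only [Finset.mem_insert, Finset.mem_singleton] at hy
    rcases hy with rfl | rfl
    · exact absurd huA hyA
    · simp only [bd, Finset.mem_filter, Finset.mem_univ, true_and]
      exact ⟨hyA, x, hx, hxy⟩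
  obtain ⟨B, hB, hk, hdom⟩ := grow hG A hA (Finset.card_le_card hsub)
  have h1 := tree_of_dom hcard hB hdom
  rw [Finset.card_erase_of_mem hu] at hk
  omega

lemma lower {G : SimpleGraph V} {T : SimpleGraph V} (hTG : T ≤ G) (hT : T.IsTree) :
    Shatters (Ccon G) (Finset.univ.filter (fun v => IsLeaf T v)) := by
  intro S' hS'
  set L := Finset.univ.filter (fun v => IsLeaf T v) with hL
  refine ⟨(L \ S')ᶜ, ?_, ?_⟩
  · simp only [Ccon, Finset.mem_filter, Finset.mem_univ, true_and]
    rcases ((L \ S')ᶜ).eq_empty_or_nonempty with h | ⟨u, hu⟩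
    · exact Or.inl h
    · right
      have hp : (T.induce (((L \ S')ᶜ : Finset V) : Set V)).Preconnected := by
        apply hT.connected.preconnected.induce_of_degree_eq_one
        intro v hv
        have hv : v ∈ L \ S' := by simpa using hv
        have hvL := (Finset.mem_filter.mp (Finset.mem_sdiff.mp hv).1).2
        obtain ⟨w, hw⟩ := (isLeaf_iff T v).mp hvL
        intro a ha b hb
        exact ((hw a).mp ha).trans ((hw b).mp hb).symm
      have hc : (T.induce (((L \ S')ᶜ : Finset V) : Set V)).Connected :=
        { preconnected := hp, nonempty := ⟨⟨u, by exact_mod_cast hu⟩⟩ }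
      exact hc.mono (fun a b h => hTG h)
  · ext v
    have := @hS' v
    simp only [Finset.mem_inter, Finset.mem_compl, Finset.mem_sdiff]
    tauto

end ConVcd

/-- For every connected finite simple graph `G` with at least two
vertices, `ℓ(G) ≤ VCD(C_con(G)) ≤ ℓ(G) + 1`. -/
theorem con_vcd_bounds {V : Type*} [Fintype V] [DecidableEq V]
    (G : SimpleGraph V) (hconn : G.Connected) (hcard : 2 ≤ Fintype.card V) :
    ell G ≤ VCD (Ccon G) ∧ VCD (Ccon G) ≤ ell G + 1 := by
  have hne : G.Connected := hconn
  constructor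
  · apply csSup_le'
    rintro k ⟨T, hTG, hT, rfl⟩
    exact le_csSup (ConVcd.bdd_vcd _) ⟨_, ConVcd.lower hTG hT, rfl⟩
  · apply csSup_le'
    rintro k ⟨S, hS, rfl⟩
    exact ConVcd.upper hconn hcard S hS
end

section
/- For every finite simple graph G each of whose connected components has at least two vertices, ℓ(G) ≤ VCD(C_con(G)) ≤ ℓ(G) + 1. -/
open scoped Classical

namespace ConVCD

lemma conn_insert {V : Type*} {G : SimpleGraph V} {D : Set V} {x y : V}
    (hD : (G.induce D).Connected) (hx : x ∈ D) (h : G.Adj x y) :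
    (G.induce (insert y D)).Connected := by
  have h1 := SimpleGraph.induce_union_connected hD.preconnected
    (SimpleGraph.induce_pair_connected_of_adj h).preconnected
    ⟨x, hx, by simp⟩
  have : D ∪ {x, y} = insert y D := by
    ext z; simp only [Set.mem_union, Set.mem_insert_iff, Set.mem_singleton_iff]
    constructor
    · rintro (h | rfl | rfl) <;> simp_all
    · rintro (h | h) <;> simp_all
  rwa [this] at h1

lemma cross {V : Type*} {G : SimpleGraph V} {C D : Set V} {a b : V}
    (hC : (G.induce C).Connected) (ha : a ∈ C) (haD : a ∈ D) (hb : b ∈ C) (hbD : b ∉ D) :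
    ∃ x y, x ∈ C ∧ y ∈ C ∧ x ∈ D ∧ y ∉ D ∧ G.Adj x y := by
  obtain ⟨p⟩ := hC.preconnected ⟨a, ha⟩ ⟨b, hb⟩
  obtain ⟨d, -, h1, h2⟩ := p.exists_boundary_dart (Subtype.val ⁻¹' D) haD hbD
  exact ⟨d.fst.1, d.snd.1, d.fst.2, d.snd.2, h1, h2, d.adj⟩

lemma sub_supp {V : Type*} {G : SimpleGraph V} {C : Set V} {u v : V}
    (hC : (G.induce C).Connected) (hu : u ∈ C) (hv : v ∈ C) :
    v ∈ (G.connectedComponentMk u).supp := by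
  rw [SimpleGraph.ConnectedComponent.mem_supp_iff, SimpleGraph.ConnectedComponent.eq]
  exact (hC.preconnected ⟨v, hv⟩ ⟨u, hu⟩).map (SimpleGraph.Embedding.induce C).toHom

open scoped Classical in
/-- outer boundary -/
noncomputable def bd {V : Type*} [Fintype V] (G : SimpleGraph V) (D : Finset V) : Finset V :=
  Finset.univ.filter (fun v => v ∉ D ∧ ∃ x ∈ D, G.Adj x v)

lemma mem_bd {V : Type*} [Fintype V] {G : SimpleGraph V} {D : Finset V} {v : V} :
    v ∈ bd G D ↔ v ∉ D ∧ ∃ x ∈ D, G.Adj x v := by simp [bd]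

lemma start {V : Type*} [Fintype V] [DecidableEq V] (G : SimpleGraph V) (S : Finset V)
    (hS : Shatters (Ccon G) S) (u : V) (hu : u ∈ S) :
    ∃ D : Finset V, u ∈ D ∧ IsConnSet G D ∧ S.card ≤ (bd G D).card + 1 := by
  classical
  let F : Finset (Finset V) :=
    Finset.univ.filter (fun D => u ∈ D ∧ IsConnSet G D ∧ ∀ x ∈ D, x ∈ S → x = u)
  have hF : F.Nonempty := by
    refine ⟨{u}, ?_⟩
    simp only [F, Finset.mem_filter, Finset.mem_univ, true_and, Finset.mem_singleton]
    refine ⟨?_, fun x hx _ => hx⟩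
    unfold IsConnSet
    rw [Finset.coe_singleton]
    exact ⟨.of_subsingleton⟩
  obtain ⟨D, hD, hmax⟩ := F.exists_max_image Finset.card hF
  simp only [F, Finset.mem_filter, Finset.mem_univ, true_and] at hD hmax
  obtain ⟨huD, hDc, hDS⟩ := hD
  refine ⟨D, huD, hDc, ?_⟩
  have : S.erase u ⊆ bd G D := by
    intro b hb
    obtain ⟨hbu, hbS⟩ := Finset.mem_erase.1 hb
    obtain ⟨C, hC, hCS⟩ := hS {u, b} (by intro z; simp; rintro (rfl | rfl) <;> assumption)
    have huC : u ∈ C := (Finset.mem_inter.1 (hCS ▸ (by simp : u ∈ ({u, b} : Finset V)))).1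
    have hbC : b ∈ C := (Finset.mem_inter.1 (hCS ▸ (by simp : b ∈ ({u, b} : Finset V)))).1
    have hbD : b ∉ D := fun h => hbu (hDS b h hbS)
    have hCc : IsConnSet G C := by
      rcases (Finset.mem_filter.1 hC).2 with h | h
      · subst h; simp at huC
      · exact h
    obtain ⟨x, y, hxC, hyC, hxD, hyD, hxy⟩ :=
      cross (D := (D : Set V)) hCc (by simpa using huC) (by simpa using huD)
        (by simpa using hbC) (by simpa using hbD)
    have hyS : y = b := by
      by_contra hyb
      have h1 : ∀ z ∈ insert y D, z ∈ S → z = u := by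
        intro z hz hzS
        rcases Finset.mem_insert.1 hz with rfl | hz
        · have : z ∈ C ∩ S := Finset.mem_inter.2 ⟨by simpa using hyC, hzS⟩
          rw [hCS] at this
          simp at this
          tauto
        · exact hDS z hz hzS
      have h2 : IsConnSet G (insert y D) := by
        unfold IsConnSet
        rw [Finset.coe_insert]
        exact conn_insert hDc hxD hxy
      have := hmax (insert y D) ⟨by simp [huD], h2, h1⟩
      rw [Finset.card_insert_of_notMem (by simpa using hyD)] at this
      omega
    subst hyS
    exact mem_bd.2 ⟨hbD, x, by simpa using hxD, hxy⟩
  have h := Finset.card_le_card this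
  rw [Finset.card_erase_of_mem hu] at h
  omega

lemma grow {V : Type*} [Fintype V] (G : SimpleGraph V) (u : V) (k : ℕ)
    (D₀ : Finset V) (hu : u ∈ D₀) (hc : IsConnSet G D₀) (hk : k ≤ (bd G D₀).card) :
    ∃ D : Finset V, u ∈ D ∧ IsConnSet G D ∧ k ≤ (bd G D).card ∧
      ∀ w ∈ (G.connectedComponentMk u).supp, w ∈ D ∨ w ∈ bd G D := by
  classical
  let F : Finset (Finset V) :=
    Finset.univ.filter (fun D => u ∈ D ∧ IsConnSet G D ∧ k ≤ (bd G D).card)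
  have hF : F.Nonempty := ⟨D₀, by simp [F, *]⟩
  obtain ⟨D, hD, hmax⟩ := F.exists_max_image Finset.card hF
  simp only [F, Finset.mem_filter, Finset.mem_univ, true_and] at hD hmax
  obtain ⟨huD, hDc, hDk⟩ := hD
  refine ⟨D, huD, hDc, hDk, ?_⟩
  intro w hw
  by_contra hwD
  obtain ⟨x, y, -, -, hx, hy, hxy⟩ :=
    cross (D := {z | z ∈ D ∨ z ∈ bd G D})
      ((G.connectedComponentMk u).connected_toSimpleGraph)
      (show u ∈ _ from rfl) (Or.inl huD) hw hwD
  simp only [Set.mem_setOf_eq, not_or] at hx hy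
  have hxD : x ∉ D := fun h => hy.2 (mem_bd.2 ⟨hy.1, x, h, hxy⟩)
  have hxb : x ∈ bd G D := hx.resolve_left hxD
  obtain ⟨-, z, hzD, hzx⟩ := mem_bd.1 hxb
  have h2 : IsConnSet G (insert x D) := by
    unfold IsConnSet
    rw [Finset.coe_insert]
    exact conn_insert hDc (by simpa using hzD) hzx
  have hyx : y ≠ x := hxy.ne'
  have hsub : insert y ((bd G D).erase x) ⊆ bd G (insert x D) := by
    intro t ht
    rcases Finset.mem_insert.1 ht with rfl | ht
    · exact mem_bd.2 ⟨by simp [hyx, hy.1], x, by simp, hxy⟩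
    · obtain ⟨htx, ht⟩ := Finset.mem_erase.1 ht
      obtain ⟨h1, s, hs, hst⟩ := mem_bd.1 ht
      exact mem_bd.2 ⟨by simp [htx, h1], s, by simp [hs], hst⟩
  have h3 := Finset.card_le_card hsub
  rw [Finset.card_insert_of_notMem (by simp [hy.2]), Finset.card_erase_of_mem hxb] at h3
  have := hmax (insert x D) ⟨by simp [huD], h2, by omega⟩
  rw [Finset.card_insert_of_notMem hxD] at this
  omega

lemma reach_adj {W : Type*} {T : SimpleGraph W} {a b : W} (h : T.Reachable a b) (hne : a ≠ b) :
    ∃ z, T.Adj a z := by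
  obtain ⟨p⟩ := h
  cases p with
  | nil => exact absurd rfl hne
  | cons h _ => exact ⟨_, h⟩

lemma tree {V : Type*} [Fintype V] (G : SimpleGraph V) (u : V)
    (c : G.ConnectedComponent) (huc : u ∈ c.supp) [Fintype c.supp]
    (D : Finset V) (hu : u ∈ D) (hc : IsConnSet G D)
    (hdom : ∀ w ∈ c.supp, w ∈ D ∨ w ∈ bd G D) :
    ∃ T : SimpleGraph c.supp, T ≤ G.induce c.supp ∧ T.IsTree ∧ (bd G D).card ≤ leafCount T := by
  classical
  have hcu : G.connectedComponentMk u = c := huc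
  have hDsub : ∀ v ∈ D, v ∈ c.supp := fun v hv => hcu ▸ sub_supp hc (by simpa using hu) (by simpa using hv)
  have hBsub : ∀ v ∈ bd G D, v ∈ c.supp := by
    intro v hv
    obtain ⟨-, x, hx, hxv⟩ := mem_bd.1 hv
    exact (c.mem_supp_congr_adj hxv).1 (hDsub x hx)
  have hf : ∀ w : c.supp, ∃ p : c.supp, w.1 ∉ D → p.1 ∈ D ∧ G.Adj p.1 w.1 := by
    intro w
    by_cases hw : w.1 ∈ D
    · exact ⟨w, fun h => absurd hw h⟩
    · obtain ⟨-, x, hx, hxv⟩ := mem_bd.1 ((hdom w.1 w.2).resolve_left hw)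
      exact ⟨⟨x, hDsub x hx⟩, fun _ => ⟨hx, hxv⟩⟩
  choose f hf using hf
  let H : SimpleGraph c.supp :=
    { Adj := fun x y => G.Adj x.1 y.1 ∧
        ((x.1 ∈ D ∧ y.1 ∈ D) ∨ (x.1 ∉ D ∧ y = f x) ∨ (y.1 ∉ D ∧ x = f y))
      symm := ⟨fun x y h => ⟨h.1.symm, by tauto⟩⟩
      loopless := ⟨fun x h => G.loopless.irrefl _ h.1⟩ }
  have hDreach : ∀ v (hv : v ∈ D), H.Reachable ⟨v, hDsub v hv⟩ ⟨u, huc⟩ := by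
    intro v hv
    let φ : G.induce (D : Set V) →g H :=
      { toFun := fun x => ⟨x.1, hDsub x.1 x.2⟩
        map_rel' := fun {a b} h => ⟨h, Or.inl ⟨a.2, b.2⟩⟩ }
    exact (hc.preconnected ⟨v, hv⟩ ⟨u, hu⟩).map φ
  have hreach : ∀ w, H.Reachable w ⟨u, huc⟩ := by
    intro w
    by_cases hw : w.1 ∈ D
    · exact hDreach w.1 hw
    · have h1 : H.Adj w (f w) := ⟨(hf w hw).2.symm, Or.inr (Or.inl ⟨hw, rfl⟩)⟩
      exact h1.reachable.trans (hDreach (f w).1 (hf w hw).1)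
  have hH : H.Connected := by
    haveI : Nonempty c.supp := ⟨⟨u, huc⟩⟩
    exact ⟨fun a b => (hreach a).trans (hreach b).symm⟩
  obtain ⟨T, hTH, hT⟩ := hH.exists_isTree_le
  refine ⟨T, fun x y h => (hTH h).1, hT, ?_⟩
  unfold leafCount
  have himg : bd G D ⊆ (Finset.univ.filter (fun v => IsLeaf T v)).image Subtype.val := by
    intro v hv
    have hvD := (mem_bd.1 hv).1
    refine Finset.mem_image.2 ⟨⟨v, hBsub v hv⟩, ?_, rfl⟩
    obtain ⟨w, hw⟩ : ∃ w : c.supp, w = ⟨v, hBsub v hv⟩ := ⟨_, rfl⟩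
    have hwv : w.1 = v := by rw [hw]
    rw [← hw]
    rw [← hwv] at hvD
    simp only [Finset.mem_filter, Finset.mem_univ, true_and]
    unfold IsLeaf deg
    have honly : ∀ z, T.Adj w z → z = f w := by
      intro z hz
      rcases (hTH hz).2 with h | h | h
      · exact absurd h.1 hvD
      · exact h.2
      · exact absurd (by rw [h.2]; exact (hf z h.1).1) hvD
    have hex : ∃ z, T.Adj w z := by
      have hne : w ≠ ⟨u, huc⟩ := by
        intro h
        exact hvD (by rw [h]; exact hu)
      exact reach_adj (hT.connected.preconnected w ⟨u, huc⟩) hne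
    obtain ⟨z, hz⟩ := hex
    rw [Finset.card_eq_one]
    refine ⟨f w, ?_⟩
    ext t
    simp only [Finset.mem_filter, Finset.mem_univ, true_and, Finset.mem_singleton]
    refine ⟨honly t, ?_⟩
    rintro rfl
    rwa [← honly z hz]
  exact (Finset.card_le_card himg).trans Finset.card_image_le

lemma path_avoid {W : Type*} [Fintype W] (T : SimpleGraph W) (R : Set W)
    (hR : ∀ r ∈ R, IsLeaf T r) {a b : W} (p : T.Walk a b) (hp : p.IsPath)
    (ha : a ∉ R) (hb : b ∉ R) : (T.induce Rᶜ).Reachable ⟨a, ha⟩ ⟨b, hb⟩ := by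
  classical
  induction p with
  | nil => exact .refl _
  | @cons a v b h p ih =>
    rw [SimpleGraph.Walk.cons_isPath_iff] at hp
    have hv : v ∉ R := by
      cases p with
      | nil => exact hb
      | @cons _ w _ h' q =>
        intro hvR
        have h1 := hR v hvR
        unfold IsLeaf deg at h1
        have haw : a = w := by
          refine Finset.card_le_one.1 h1.le a ?_ w ?_
          · simpa using h.symm
          · simpa using h'
        apply hp.2
        rw [haw]
        simp
    have h1 : (T.induce Rᶜ).Adj ⟨a, ha⟩ ⟨v, hv⟩ := h
    exact h1.reachable.trans (ih hp.1 hv hb)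

lemma lower {V : Type*} [Fintype V] [DecidableEq V] (G : SimpleGraph V)
    (s : Set V) [Fintype s] (T : SimpleGraph s) (hTG : T ≤ G.induce s)
    (hT : T.Connected) : ∃ S : Finset V, Shatters (Ccon G) S ∧ S.card = leafCount T := by
  classical
  refine ⟨(Finset.univ.filter (fun v => IsLeaf T v)).map (Function.Embedding.subtype _), ?_, ?_⟩
  swap
  · rw [Finset.card_map]; unfold leafCount; congr
  set S := (Finset.univ.filter (fun v => IsLeaf T v)).map (Function.Embedding.subtype _) with hS
  have hmem : ∀ w : s, w.1 ∈ S → IsLeaf T w := by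
    intro w hw
    rw [hS] at hw
    simpa using hw
  have hSs : ∀ v ∈ S, v ∈ s := by
    intro v hv
    rw [hS] at hv
    simp at hv
    exact hv.1
  intro S' hS'
  let C : Finset V := Finset.univ.filter (fun v => v ∈ s ∧ (v ∈ S → v ∈ S'))
  refine ⟨C, ?_, ?_⟩
  · unfold Ccon
    simp only [Finset.mem_filter, Finset.mem_univ, true_and]
    rcases C.eq_empty_or_nonempty with h | ⟨v, hv⟩
    · exact Or.inl h
    right
    let R : Set s := {w | w.1 ∈ S ∧ w.1 ∉ S'}
    have hpre : ∀ (a b : s) (ha : a ∉ R) (hb : b ∉ R),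
        (T.induce Rᶜ).Reachable ⟨a, ha⟩ ⟨b, hb⟩ := by
      intro a b ha hb
      obtain ⟨p, hp⟩ := hT.exists_isPath a b
      exact path_avoid T R (fun r hr => hmem r hr.1) p hp ha hb
    have hRC : ∀ w : s, w ∉ R → w.1 ∈ C := by
      intro w hw
      simp only [C, Finset.mem_filter, Finset.mem_univ, true_and]
      refine ⟨w.2, fun h => ?_⟩
      by_contra h'
      exact hw ⟨h, h'⟩
    let φ : T.induce Rᶜ →g G.induce (C : Set V) :=
      { toFun := fun x => ⟨x.1.1, hRC x.1 x.2⟩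
        map_rel' := fun {a b} h => hTG h }
    have hCR : ∀ x ∈ C, ∃ h : x ∈ s, (⟨x, h⟩ : s) ∉ R := by
      intro x hx
      simp only [C, Finset.mem_filter, Finset.mem_univ, true_and] at hx
      exact ⟨hx.1, fun h => h.2 (hx.2 h.1)⟩
    unfold IsConnSet
    haveI : Nonempty (C : Set V) := ⟨⟨v, hv⟩⟩
    refine ⟨?_⟩
    rintro ⟨x, hx⟩ ⟨y, hy⟩
    obtain ⟨hxs, hxR⟩ := hCR x hx
    obtain ⟨hys, hyR⟩ := hCR y hy
    exact (hpre _ _ hxR hyR).map φ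
  · ext v
    simp only [C, Finset.mem_inter, Finset.mem_filter, Finset.mem_univ, true_and]
    exact ⟨fun h => h.1.2 h.2, fun h => ⟨⟨hSs v (hS' h), fun _ => h⟩, hS' h⟩⟩

lemma le_VCD {V : Type*} [Fintype V] [DecidableEq V] (𝒞 : Finset (Finset V)) (S : Finset V)
    (h : Shatters 𝒞 S) : S.card ≤ VCD 𝒞 := by
  refine le_csSup ⟨Fintype.card V, ?_⟩ ⟨S, h, rfl⟩
  rintro n ⟨S, -, rfl⟩
  exact Finset.card_le_univ S

lemma le_ell {W : Type*} [Fintype W] (G T : SimpleGraph W) (h : T ≤ G) (hT : T.IsTree) :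
    leafCount T ≤ ell G := by
  refine le_csSup ⟨Fintype.card W, ?_⟩ ⟨T, h, hT, rfl⟩
  rintro n ⟨S, -, -, rfl⟩
  exact Finset.card_le_univ _

end ConVCD

/-- For every finite simple graph `G` each of whose connected
components has at least two vertices, `ℓ(G) ≤ VCD(C_con(G)) ≤ ℓ(G) + 1`, where
`ℓ(G)` is the maximum of `ℓ` over the connected components of `G`. -/
theorem con_vcd_bounds_general {V : Type*} [Fintype V] [DecidableEq V]
    (G : SimpleGraph V)
    (hcomp : ∀ c : G.ConnectedComponent, ∃ x y : V, x ∈ c.supp ∧ y ∈ c.supp ∧ x ≠ y) :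
    ellGen G ≤ VCD (Ccon G) ∧ VCD (Ccon G) ≤ ellGen G + 1 := by
  constructor
  · refine csSup_le' ?_
    rintro k ⟨c, rfl⟩
    refine csSup_le' ?_
    rintro k ⟨T, hTG, hT, rfl⟩
    obtain ⟨S, hS, hcard⟩ := ConVCD.lower G c.supp T hTG hT.connected
    rw [← hcard]
    exact ConVCD.le_VCD _ S hS
  · refine csSup_le' ?_
    rintro k ⟨S, hS, rfl⟩
    rcases S.eq_empty_or_nonempty with rfl | ⟨u, hu⟩
    · simp
    obtain ⟨D₀, hu0, hc0, hk0⟩ := ConVCD.start G S hS u hu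
    obtain ⟨D, huD, hc, hk, hdom⟩ := ConVCD.grow G u _ D₀ hu0 hc0 le_rfl
    obtain ⟨T, hTG, hT, hl⟩ := ConVCD.tree G u (G.connectedComponentMk u) rfl D huD hc hdom
    have h1 := ConVCD.le_ell _ T hTG hT
    have h2 : ell (G.induce (G.connectedComponentMk u).supp) ≤ ellGen G :=
      le_csSup (Set.finite_range
        (fun c : G.ConnectedComponent => ell (G.induce c.supp))).bddAbove ⟨_, rfl⟩
    omega
end

section
/- For every connected finite simple graph G with at least two vertices, RTD(C_con(G)) ≥ ℓ(G). -/
open scoped Classical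

theorem TD_le_of_subset {X : Type*} [Fintype X] [DecidableEq X] {𝒞 𝒟 : Finset (Finset X)}
    (h : 𝒟 ⊆ 𝒞) (C : Finset X) : TD 𝒟 C ≤ TD 𝒞 C := by
  have hne : TD 𝒞 C ∈ {n | ∃ D : Finset X, IsTeachingSet 𝒞 C D ∧ D.card = n} := by
    refine Nat.sInf_mem ⟨_, Finset.univ, ?_, rfl⟩
    intro C' _ hne
    by_contra hcon
    push Not at hcon
    exact hne (Finset.ext fun x => hcon x (Finset.mem_univ x))
  obtain ⟨D, hD, hc⟩ := hne
  exact Nat.sInf_le ⟨D, fun C' hC' => hD C' (h hC'), hc⟩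

theorem le_RTD_of_subset {X : Type*} [Fintype X] [DecidableEq X] (k : ℕ)
    (𝒟 : Finset (Finset X)) (hne : 𝒟.Nonempty) (hk : ∀ C ∈ 𝒟, k ≤ TD 𝒟 C) :
    ∀ (n : ℕ) (𝒞 : Finset (Finset X)), 𝒞.card = n → 𝒟 ⊆ 𝒞 → k ≤ RTD 𝒞 := by
  intro n
  induction n using Nat.strong_induction_on with
  | _ n ih =>
    intro 𝒞 hn hsub
    by_cases hex : ∃ C ∈ 𝒟, TD 𝒞 C = TDmin 𝒞
    · obtain ⟨C, hC, hT⟩ := hex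
      have h1 : k ≤ TDmin 𝒞 := hT ▸ (hk C hC).trans (TD_le_of_subset hsub C)
      rw [RTD]
      split_ifs
      · exact h1
      · exact h1.trans (le_max_left _ _)
    · push Not at hex
      obtain ⟨C₀, hC₀⟩ := hne
      have hneq : ¬ (𝒞 = 𝒞.filter (fun C => TD 𝒞 C = TDmin 𝒞)) := by
        intro h
        have := hsub hC₀
        rw [h, Finset.mem_filter] at this
        exact hex C₀ hC₀ this.2
      rw [RTD, dif_neg hneq]
      refine le_trans ?_ (le_max_right _ _)
      refine ih _ ?_ _ rfl ?_
      · rw [← hn]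
        obtain ⟨C, hC, hTD⟩ : TDmin 𝒞 ∈ {n | ∃ C ∈ 𝒞, TD 𝒞 C = n} :=
          Nat.sInf_mem ⟨TD 𝒞 C₀, C₀, hsub hC₀, rfl⟩
        refine Finset.card_lt_card ?_
        refine (Finset.ssubset_iff_of_subset Finset.sdiff_subset).mpr ?_
        exact ⟨C, hC, by simp [Finset.mem_sdiff, Finset.mem_filter, hC, hTD]⟩
      · intro C hC
        simp [hsub hC, hex C hC]

theorem cube_TD {X : Type*} [Fintype X] [DecidableEq X] (L : Finset X) (C : Finset X)
    (hC : Lᶜ ⊆ C) :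
    L.card ≤ TD (Finset.univ.filter (fun C : Finset X => Lᶜ ⊆ C)) C := by
  refine le_csInf ⟨_, Finset.univ, ?_, rfl⟩ ?_
  · intro C' _ hne
    by_contra hcon
    push Not at hcon
    exact hne (Finset.ext fun x => hcon x (Finset.mem_univ x))
  · rintro n ⟨D, hD, rfl⟩
    refine Finset.card_le_card ?_
    intro x hx
    by_cases hxC : x ∈ C
    · obtain ⟨y, hy, hy'⟩ := hD (C.erase x) (by
        simp only [Finset.mem_filter, Finset.mem_univ, true_and]
        intro z hz
        refine Finset.mem_erase.2 ⟨?_, hC hz⟩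
        rintro rfl
        exact (Finset.mem_compl.1 hz) hx) (by
          intro h
          have := Finset.notMem_erase x C
          rw [h] at this
          exact this hxC)
      have : y = x := by
        by_contra hyx
        exact hy' (by simp [hyx])
      exact this ▸ hy
    · obtain ⟨y, hy, hy'⟩ := hD (insert x C) (by
        simp only [Finset.mem_filter, Finset.mem_univ, true_and]
        exact hC.trans (Finset.subset_insert _ _)) (by
          intro h
          have := Finset.mem_insert_self x C
          rw [h] at this
          exact hxC this)
      have : y = x := by
        by_contra hyx
        exact hy' (by simp [hyx])
      exact this ▸ hy

theorem path_interior {V : Type*} {T : SimpleGraph V} {u v : V} (p : T.Walk u v) :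
    p.IsPath → ∀ w ∈ p.support, w = u ∨ w = v ∨ ∃ x y, x ≠ y ∧ T.Adj w x ∧ T.Adj w y := by
  induction p with
  | nil => intro _ w hw; left; simpa using hw
  | @cons a b c h q ih =>
    intro hp w hw
    rw [SimpleGraph.Walk.cons_isPath_iff] at hp
    rw [SimpleGraph.Walk.support_cons, List.mem_cons] at hw
    rcases hw with rfl | hw
    · exact Or.inl rfl
    rcases ih hp.1 w hw with rfl | rfl | h'
    · cases q with
      | nil => exact Or.inr (Or.inl rfl)
      | @cons _ d _ h2 q' =>
        refine Or.inr (Or.inr ⟨a, d, ?_, h.symm, h2⟩)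
        rintro rfl
        exact hp.2 (by simp)
    · exact Or.inr (Or.inl rfl)
    · exact Or.inr (Or.inr h')

/-- For every connected finite simple graph `G` with at least two
vertices, `RTD(C_con(G)) ≥ ℓ(G)`. -/
theorem con_rtd_lower {V : Type*} [Fintype V] [DecidableEq V]
    (G : SimpleGraph V) (hconn : G.Connected) (hcard : 2 ≤ Fintype.card V) :
    ell G ≤ RTD (Ccon G) := by
  obtain ⟨T₀, hT₀, hT₀'⟩ := hconn.exists_isTree_le
  refine csSup_le ⟨_, T₀, hT₀, hT₀', rfl⟩ ?_
  rintro k ⟨T, hTG, hT, rfl⟩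
  let L : Finset V := Finset.univ.filter (fun v => IsLeaf T v)
  change L.card ≤ _
  refine le_RTD_of_subset L.card (Finset.univ.filter (fun C : Finset V => Lᶜ ⊆ C))
    ⟨Finset.univ, by simp⟩ ?_ _ _ rfl ?_
  · intro C hC
    exact cube_TD L C (Finset.mem_filter.1 hC).2
  · intro C hC
    have hC := (Finset.mem_filter.1 hC).2
    refine Finset.mem_filter.2 ⟨Finset.mem_univ _, ?_⟩
    rcases Finset.eq_empty_or_nonempty C with h | hne
    · exact Or.inl h
    refine Or.inr ?_
    unfold IsConnSet
    have : Nonempty (C : Set V) := hne.to_subtype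
    refine SimpleGraph.Connected.mk ?_
    rintro ⟨a, ha⟩ ⟨b, hb⟩
    obtain ⟨p, hp⟩ := (hT.connected a b).exists_isPath
    have hsupp : ∀ x ∈ p.support, x ∈ (C : Set V) := by
      intro x hx
      rcases path_interior p hp x hx with rfl | rfl | ⟨y, z, hyz, hy, hz⟩
      · exact ha
      · exact hb
      · refine hC ?_
        simp only [L, Finset.mem_compl, Finset.mem_filter, Finset.mem_univ, true_and]
        intro hl
        unfold IsLeaf deg at hl
        obtain ⟨w, hw⟩ := Finset.card_eq_one.1 hl
        have h1 : y ∈ ({w} : Finset V) := hw ▸ (by simp [hy])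
        have h2 : z ∈ ({w} : Finset V) := hw ▸ (by simp [hz])
        simp only [Finset.mem_singleton] at h1 h2
        exact hyz (h1.trans h2.symm)
    exact ((p.induce _ hsupp).reachable).mono (SimpleGraph.comap_monotone _ hTG)
end

section
/- For every finite simple graph G each of whose connected components has at least two vertices, ℓ(G) ≤ RTD(C_con(G)) ≤ ℓ(G) + 1. -/
open scoped Classical

section aux
variable {X : Type*} [DecidableEq X]

lemma td_nonempty (𝒞 : Finset (Finset X)) (C : Finset X) :
    ∃ D : Finset X, IsTeachingSet 𝒞 C D ∧ D.card = TD 𝒞 C := by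
  refine Nat.sInf_mem (s := {n | ∃ D : Finset X, IsTeachingSet 𝒞 C D ∧ D.card = n})
    ⟨_, (C ∪ 𝒞.biUnion id), ?_, rfl⟩
  intro C' hC' hne
  by_contra hcon
  push Not at hcon
  apply hne
  ext x
  constructor
  · intro hx
    exact (hcon x (Finset.mem_union_right _ (Finset.mem_biUnion.2 ⟨C', hC', hx⟩))).1 hx
  · intro hx
    exact (hcon x (Finset.mem_union_left _ hx)).2 hx

lemma td_le {𝒞 : Finset (Finset X)} {C D : Finset X} (h : IsTeachingSet 𝒞 C D) :
    TD 𝒞 C ≤ D.card := Nat.sInf_le ⟨D, h, rfl⟩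

lemma tdmin_le {𝒞 : Finset (Finset X)} {C : Finset X} (h : C ∈ 𝒞) :
    TDmin 𝒞 ≤ TD 𝒞 C := Nat.sInf_le ⟨C, h, rfl⟩

lemma td_mono {𝒞 𝒟 : Finset (Finset X)} (h : 𝒟 ⊆ 𝒞) (C : Finset X) : TD 𝒟 C ≤ TD 𝒞 C := by
  obtain ⟨D, hD, hc⟩ := td_nonempty 𝒞 C
  rw [← hc]
  exact td_le (fun C' hC' => hD C' (h hC'))

lemma exists_tdmin {𝒞 : Finset (Finset X)} (h : 𝒞.Nonempty) : ∃ C ∈ 𝒞, TD 𝒞 C = TDmin 𝒞 := by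
  obtain ⟨C, hC⟩ := h
  exact Nat.sInf_mem (s := {n | ∃ C ∈ 𝒞, TD 𝒞 C = n}) ⟨_, C, hC, rfl⟩

lemma rtd_lower (k : ℕ) (𝒟 : Finset (Finset X)) (hne : 𝒟.Nonempty)
    (hk : ∀ C ∈ 𝒟, k ≤ TD 𝒟 C) :
    ∀ (n : ℕ) (𝒞 : Finset (Finset X)), 𝒞.card ≤ n → 𝒟 ⊆ 𝒞 → k ≤ RTD 𝒞 := by
  intro n
  induction n with
  | zero =>
    intro 𝒞 hc hs
    obtain ⟨C, hC⟩ := hne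
    have := Finset.card_pos.2 ⟨C, hs hC⟩
    omega
  | succ n ih =>
    intro 𝒞 hc hs
    rw [RTD]
    by_cases hlt : k ≤ TDmin 𝒞
    · split_ifs
      · exact hlt
      · exact le_max_of_le_left hlt
    · have hsub : 𝒟 ⊆ 𝒞 \ 𝒞.filter (fun C => TD 𝒞 C = TDmin 𝒞) := by
        intro C hC
        simp only [Finset.mem_sdiff, Finset.mem_filter, not_and]
        refine ⟨hs hC, fun _ h => ?_⟩
        have h1 := hk C hC
        have h2 := td_mono hs C
        omega
      have hne' := hne.mono hs
      obtain ⟨C0, hC0, h0⟩ := exists_tdmin hne'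
      split_ifs with h
      · exfalso
        obtain ⟨C, hC⟩ := hne
        have := hsub hC
        rw [← h] at this
        simp at this
      · refine le_max_of_le_right (ih _ ?_ hsub)
        have : (𝒞 \ 𝒞.filter (fun C => TD 𝒞 C = TDmin 𝒞)).card < 𝒞.card := by
          refine Finset.card_lt_card ?_
          refine (Finset.ssubset_iff_of_subset Finset.sdiff_subset).mpr ?_
          exact ⟨C0, hC0, by simp [hC0, h0]⟩
        omega

lemma rtd_upper (m : ℕ) :
    ∀ (n : ℕ) (𝒞 : Finset (Finset X)), 𝒞.card ≤ n →
      (∀ 𝒟 ⊆ 𝒞, TDmin 𝒟 ≤ m) → RTD 𝒞 ≤ m := by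
  intro n
  induction n with
  | zero =>
    intro 𝒞 hc h
    have : 𝒞 = ∅ := by simpa using hc
    subst this
    rw [RTD]
    simpa using h ∅ (by simp)
  | succ n ih =>
    intro 𝒞 hc hs
    rw [RTD]
    split_ifs with h
    · exact hs _ subset_rfl
    · refine max_le (hs _ subset_rfl) (ih _ ?_ (fun 𝒟 h𝒟 => hs 𝒟 (h𝒟.trans Finset.sdiff_subset)))
      have hne : 𝒞.Nonempty := by
        rcases Finset.eq_empty_or_nonempty 𝒞 with he | hne
        · exact absurd (by simp [he]) h
        · exact hne
      obtain ⟨C0, hC0, h0⟩ := exists_tdmin hne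
      have : (𝒞 \ 𝒞.filter (fun C => TD 𝒞 C = TDmin 𝒞)).card < 𝒞.card := by
        refine Finset.card_lt_card ?_
        refine (Finset.ssubset_iff_of_subset Finset.sdiff_subset).mpr ?_
        exact ⟨C0, hC0, by simp [hC0, h0]⟩
      omega

lemma rtd_cube (𝒞 : Finset (Finset X)) (B L : Finset X) (hd : Disjoint B L)
    (h : ∀ S ⊆ L, B ∪ S ∈ 𝒞) : L.card ≤ RTD 𝒞 := by
  refine rtd_lower L.card (L.powerset.image (fun S => B ∪ S)) ?_ ?_ _ 𝒞 le_rfl ?_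
  · exact (Finset.powerset_nonempty L).image _
  · intro C hC
    obtain ⟨D, hD, hc⟩ := td_nonempty (L.powerset.image (fun S => B ∪ S)) C
    rw [← hc]
    refine Finset.card_le_card ?_
    intro x hx
    by_contra hxD
    simp only [Finset.mem_image, Finset.mem_powerset] at hC
    obtain ⟨S, hS, rfl⟩ := hC
    have hxB : x ∉ B := Finset.disjoint_right.1 hd hx
    by_cases hxS : x ∈ S
    · obtain ⟨y, hy, hn⟩ := hD (B ∪ S.erase x)
        (Finset.mem_image_of_mem _ (Finset.mem_powerset.2 ((Finset.erase_subset _ _).trans hS)))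
        (by intro he
            have : x ∈ B ∪ S.erase x := by rw [he]; simp [hxS]
            simp [hxB] at this)
      have : y ≠ x := by rintro rfl; exact hxD hy
      simp [this] at hn
    · obtain ⟨y, hy, hn⟩ := hD (B ∪ insert x S)
        (Finset.mem_image_of_mem _ (Finset.mem_powerset.2 (Finset.insert_subset hx hS)))
        (by intro he
            have : x ∈ B ∪ S := by rw [← he]; simp
            simp [hxB, hxS] at this)
      have : y ≠ x := by rintro rfl; exact hxD hy
      simp [this] at hn
  · intro C hC
    simp only [Finset.mem_image, Finset.mem_powerset] at hC
    obtain ⟨S, hS, rfl⟩ := hC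
    exact h S hS

end aux

section aux2

lemma tree_of_dom {W : Type*} [Fintype W] [Nontrivial W] (H : SimpleGraph W) (C : Set W)
    (hC : (H.induce C).Connected) (N : Finset W) (hcov : ∀ w, w ∈ N ↔ w ∉ C)
    (hN : ∀ n ∈ N, ∃ c ∈ C, H.Adj n c) :
    ∃ T : SimpleGraph W, T ≤ H ∧ T.IsTree ∧ N.card ≤ leafCount T := by
  have hN' : ∀ n : W, ∃ c : W, n ∈ N → c ∈ C ∧ H.Adj n c := by
    intro n
    by_cases h : n ∈ N
    · obtain ⟨c, h1, h2⟩ := hN n h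
      exact ⟨c, fun _ => ⟨h1, h2⟩⟩
    · exact ⟨n, fun h' => absurd h' h⟩
  choose f hf using hN'
  let K : SimpleGraph W :=
    { Adj := fun a b => H.Adj a b ∧ ((a ∈ C ∧ b ∈ C) ∨ (a ∉ C ∧ b = f a) ∨ (b ∉ C ∧ a = f b))
      symm := ⟨by
        intro a b h
        refine ⟨h.1.symm, ?_⟩
        tauto⟩
      loopless := ⟨fun a h => H.loopless.irrefl a h.1⟩ }
  have hKH : K ≤ H := fun a b h => h.1
  have hCr : ∀ a b : W, a ∈ C → b ∈ C → K.Reachable a b := by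
    intro a b ha hb
    have h := hC.preconnected ⟨a, ha⟩ ⟨b, hb⟩
    let φ : H.induce C →g K := ⟨fun x => x.1, fun {x y} h => ⟨h, Or.inl ⟨x.2, y.2⟩⟩⟩
    exact h.map φ
  obtain ⟨c0, hc0⟩ := hC.nonempty
  have hall : ∀ a, K.Reachable a c0 := by
    intro a
    by_cases ha : a ∈ C
    · exact hCr _ _ ha hc0
    · have h := hf a ((hcov a).2 ha)
      have hadj : K.Adj a (f a) := ⟨h.2, Or.inr (Or.inl ⟨ha, rfl⟩)⟩
      exact hadj.reachable.trans (hCr _ _ h.1 hc0)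
  have hKc : K.Connected := by
    haveI : Nonempty W := ⟨c0⟩
    exact ⟨fun a b => (hall a).trans (hall b).symm⟩
  obtain ⟨T, hTK, hT⟩ := hKc.exists_isTree_le
  refine ⟨T, hTK.trans hKH, hT, ?_⟩
  refine Finset.card_le_card ?_
  intro n hn
  refine Finset.mem_filter.2 ⟨Finset.mem_univ _, ?_⟩
  unfold IsLeaf deg
  obtain ⟨u, hu⟩ := hT.connected.preconnected.exists_adj_of_nontrivial n
  have hnC := (hcov n).1 hn
  have key : ∀ w, T.Adj n w → w = f n := by
    intro w hw
    obtain ⟨h1, h2 | h2 | h2⟩ := hTK hw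
    · exact absurd h2.1 hnC
    · exact h2.2
    · exfalso
      apply hnC
      rw [h2.2]
      exact (hf w ((hcov w).2 h2.1)).1
  rw [Finset.card_eq_one]
  refine ⟨f n, ?_⟩
  ext w
  simp only [Finset.mem_filter, Finset.mem_univ, true_and, Finset.mem_singleton]
  refine ⟨key w, ?_⟩
  rintro rfl
  rw [← key u hu]; exact hu

lemma tree_of_conn {W : Type*} [Fintype W] [Nontrivial W] (H : SimpleGraph W)
    (hH : H.Connected) :
    ∀ (m : ℕ) (C N : Finset W), (Finset.univ \ (C ∪ N)).card ≤ m →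
    (H.induce (C : Set W)).Connected → Disjoint C N →
    (∀ n ∈ N, ∃ c ∈ C, H.Adj n c) →
    ∃ T : SimpleGraph W, T ≤ H ∧ T.IsTree ∧ N.card ≤ leafCount T := by
  intro m
  induction m with
  | zero =>
    intro C N hm hC hd hN
    have hcov : ∀ w, w ∈ C ∪ N := by
      intro w
      by_contra hw
      have : w ∈ Finset.univ \ (C ∪ N) := by simpa using hw
      rw [Finset.card_eq_zero.1 (Nat.le_zero.1 hm)] at this
      simp at this
    refine tree_of_dom H C hC N ?_ (by simpa using hN)
    intro w
    have := hcov w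
    have hd' : w ∈ C → w ∉ N := fun h => Finset.disjoint_left.1 hd h
    simp only [Finset.mem_union] at this
    simp only [Finset.mem_coe]
    tauto
  | succ m ih =>
    intro C N hm hC hd hN
    by_cases hex : ∃ w, w ∉ C ∪ N
    · obtain ⟨w, hw⟩ := hex
      obtain ⟨⟨c0, hc0⟩⟩ := hC.nonempty
      obtain ⟨p⟩ := hH.preconnected c0 w
      obtain ⟨⟨⟨a, b⟩, hab⟩, -, ha, hb⟩ := p.exists_boundary_dart ((C ∪ N : Finset W) : Set W)
        (by simp only [Finset.mem_coe] at hc0 ⊢; exact Finset.mem_union_left _ hc0)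
        (by simpa using hw)
      simp only [Finset.mem_coe] at ha hb
      have hbC : b ∉ C := fun h => hb (Finset.mem_union_left _ h)
      have hbN : b ∉ N := fun h => hb (Finset.mem_union_right _ h)
      change H.Adj a b at hab
      have hcard : ∀ S : Finset W, C ∪ N ⊆ S → b ∈ S → (Finset.univ \ S).card ≤ m := by
        intro S hS hbS
        have : (Finset.univ \ S).card < (Finset.univ \ (C ∪ N)).card := by
          refine Finset.card_lt_card ?_
          refine (Finset.ssubset_iff_of_subset (Finset.sdiff_subset_sdiff subset_rfl hS)).mpr ?_
          exact ⟨b, by simpa using hb, by simpa using hbS⟩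
        omega
      by_cases haC : a ∈ C
      · obtain ⟨T, h1, h2, h3⟩ := ih C (insert b N) (hcard _ (by grind) (by grind)) hC
          (by rw [Finset.disjoint_insert_right]; exact ⟨hbC, hd⟩)
          (by
            intro n hn
            rcases Finset.mem_insert.1 hn with rfl | hn
            · exact ⟨a, haC, hab.symm⟩
            · exact hN n hn)
        exact ⟨T, h1, h2, (Finset.card_le_card (Finset.subset_insert _ _)).trans h3⟩
      · have haN : a ∈ N := by grind
        obtain ⟨c, hc, hac⟩ := hN a haN
        have hconn : (H.induce ((insert a C : Finset W) : Set W)).Connected := by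
          have := SimpleGraph.induce_union_connected hC.preconnected
            (SimpleGraph.induce_pair_connected_of_adj hac).preconnected
            ⟨c, by simpa using hc, by simp⟩
          have he : ((insert a C : Finset W) : Set W) = (C : Set W) ∪ {a, c} := by
            ext x; simp only [Finset.coe_insert, Set.mem_insert_iff, Finset.mem_coe, Set.mem_union,
              Set.mem_singleton_iff]
            constructor
            · tauto
            · rintro (h | h | rfl) <;> tauto
          rw [he]; exact this
        have hba : b ≠ a := by rintro rfl; exact hbN haN
        obtain ⟨T, h1, h2, h3⟩ := ih (insert a C) (insert b (N.erase a))
          (hcard _ (by grind) (by grind)) hconn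
          (by
            rw [Finset.disjoint_left] at hd ⊢
            intro x hx
            have := @hd x
            grind)
          (by
            intro n hn
            rcases Finset.mem_insert.1 hn with rfl | hn
            · exact ⟨a, by simp, hab.symm⟩
            · obtain ⟨c, hc, h⟩ := hN n (Finset.mem_of_mem_erase hn)
              exact ⟨c, by simp [hc], h⟩)
        refine ⟨T, h1, h2, le_trans ?_ h3⟩
        rw [Finset.card_insert_of_notMem (by grind), Finset.card_erase_of_mem haN]
        omega
    · push Not at hex
      exact ih C N (by
        have : Finset.univ \ (C ∪ N) = ∅ := by
          ext x; simpa [or_iff_not_imp_left] using hex x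
        rw [this]; simp) hC hd hN

lemma leafCount_le {W : Type*} [Fintype W] (T : SimpleGraph W) :
    leafCount T ≤ Fintype.card W := Finset.card_le_univ _

lemma le_ell {W : Type*} [Fintype W] [DecidableEq W] {H T : SimpleGraph W} (h : T ≤ H)
    (hT : T.IsTree) : leafCount T ≤ ell H := by
  refine le_csSup ⟨Fintype.card W, ?_⟩ ⟨T, h, hT, rfl⟩
  rintro k ⟨T, -, -, rfl⟩
  exact leafCount_le T

lemma exists_ell {W : Type*} [Fintype W] [DecidableEq W] {H : SimpleGraph W} (h : H.Connected) :
    ∃ T ≤ H, T.IsTree ∧ leafCount T = ell H := by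
  refine Nat.sSup_mem (s := {k | ∃ T : SimpleGraph W, T ≤ H ∧ T.IsTree ∧ leafCount T = k})
    ?_ ⟨Fintype.card W, ?_⟩
  · obtain ⟨T, h1, h2⟩ := h.exists_isTree_le
    exact ⟨_, T, h1, h2, rfl⟩
  · rintro k ⟨T, -, -, rfl⟩
    exact leafCount_le T

variable {V : Type*} [Fintype V] [DecidableEq V] (G : SimpleGraph V)

lemma ellGen_bdd : BddAbove {k | ∃ c : G.ConnectedComponent, ell (G.induce c.supp) = k} := by
  have : {k | ∃ c : G.ConnectedComponent, ell (G.induce c.supp) = k}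
      = Set.range (fun c : G.ConnectedComponent => ell (G.induce c.supp)) := rfl
  rw [this]
  exact (Set.finite_range _).bddAbove

lemma lower (c : G.ConnectedComponent) : ell (G.induce c.supp) ≤ RTD (Ccon G) := by
  obtain ⟨T, hT, htree, hl⟩ := exists_ell (H := G.induce c.supp) c.connected_toSimpleGraph
  rw [← hl]
  have himg : leafCount T = ((Finset.univ.filter (fun v => IsLeaf T v)).image Subtype.val).card := by
    rw [Finset.card_image_of_injective _ Subtype.val_injective]
    rfl
  rw [himg]
  refine rtd_cube _ ((Finset.univ.filter (fun v => ¬ IsLeaf T v)).image Subtype.val) _ ?_ ?_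
  · rw [Finset.disjoint_left]
    intro x hx hx'
    simp only [Finset.mem_image, Finset.mem_filter, Finset.mem_univ, true_and] at hx hx'
    obtain ⟨a, ha, rfl⟩ := hx
    obtain ⟨b, hb, hab⟩ := hx'
    rw [Subtype.val_injective hab] at hb
    exact ha hb
  · intro S hS
    simp only [Ccon, Finset.mem_filter, Finset.mem_univ, true_and]
    set A := (Finset.univ.filter (fun v => ¬ IsLeaf T v)).image Subtype.val ∪ S with hA
    by_cases hne : A = ∅
    · exact Or.inl hne
    right
    have hAsub : ∀ x ∈ A, x ∈ c.supp := by
      intro x hx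
      rcases Finset.mem_union.1 hx with h | h
      · obtain ⟨y, -, rfl⟩ := Finset.mem_image.1 h
        exact y.2
      · obtain ⟨y, -, rfl⟩ := Finset.mem_image.1 (hS h)
        exact y.2
    have hpre : (T.induce {w | w.1 ∈ A}).Preconnected := by
      refine htree.connected.preconnected.induce_of_degree_eq_one ?_
      intro v hv
      have hleaf : IsLeaf T v := by
        by_contra hnl
        apply hv
        exact Finset.mem_union_left _ (Finset.mem_image_of_mem _ (by simpa using hnl))
      obtain ⟨u, hu⟩ := Finset.card_eq_one.1 hleaf
      have : ∀ w, T.Adj v w → w = u := by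
        intro w hw
        have : w ∈ Finset.univ.filter (fun w => T.Adj v w) := by simpa using hw
        rw [hu] at this
        simpa using this
      intro x hx y hy
      rw [this x hx, this y hy]
    let φ : T.induce {w | w.1 ∈ A} →g G.induce (A : Set V) :=
      ⟨fun x => ⟨x.1.1, x.2⟩, fun {x y} h => hT h⟩
    have hsurj : Function.Surjective φ := by
      rintro ⟨x, hx⟩
      exact ⟨⟨⟨x, hAsub x hx⟩, hx⟩, rfl⟩
    obtain ⟨x, hx⟩ := Finset.nonempty_iff_ne_empty.2 hne
    haveI : Nonempty ((A : Set V)) := ⟨⟨x, hx⟩⟩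
    exact ⟨hpre.map φ hsurj⟩

lemma openNbr_mem (A : Finset V) (n : V) :
    n ∈ openNbrSet G A ↔ n ∉ A ∧ ∃ c ∈ A, G.Adj c n := by
  simp only [openNbrSet, closedNbrSet, closedNbr, nbrFinset, Finset.mem_sdiff, Finset.mem_biUnion,
    Finset.mem_insert, Finset.mem_filter, Finset.mem_univ, true_and]
  constructor
  · rintro ⟨⟨c, hc, rfl | h⟩, h2⟩
    · exact absurd hc h2
    · exact ⟨h2, c, hc, h⟩
  · rintro ⟨h2, c, hc, h⟩
    exact ⟨⟨c, hc, Or.inr h⟩, h2⟩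

lemma openNbr_card
    (hcomp : ∀ c : G.ConnectedComponent, ∃ x y : V, x ∈ c.supp ∧ y ∈ c.supp ∧ x ≠ y)
    (A : Finset V) (hA : IsConnSet G A) : (openNbrSet G A).card ≤ ellGen G := by
  obtain ⟨⟨x, hx⟩⟩ := hA.nonempty
  let c := G.connectedComponentMk x
  haveI : Nontrivial c.supp := by
    obtain ⟨a, b, ha, hb, hab⟩ := hcomp c
    exact ⟨⟨a, ha⟩, ⟨b, hb⟩, fun h => hab (congrArg Subtype.val h)⟩
  have hAsub : ∀ y ∈ A, y ∈ c.supp := by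
    intro y hy
    have := hA.preconnected ⟨y, hy⟩ ⟨x, hx⟩
    exact SimpleGraph.ConnectedComponent.sound
      (this.map (SimpleGraph.Embedding.induce (A : Set V)).toHom)
  have hNsub : ∀ y ∈ openNbrSet G A, y ∈ c.supp := by
    intro y hy
    obtain ⟨-, a, ha, hay⟩ := (openNbr_mem G A y).1 hy
    have h := hAsub a ha
    rw [SimpleGraph.ConnectedComponent.mem_supp_iff] at h ⊢
    rw [← h]
    exact SimpleGraph.ConnectedComponent.sound hay.symm.reachable
  let C : Finset c.supp := Finset.univ.filter (fun w => w.1 ∈ A)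
  let N : Finset c.supp := Finset.univ.filter (fun w => w.1 ∈ openNbrSet G A)
  have hCc : ((G.induce c.supp).induce (C : Set c.supp)).Connected := by
    let φ : G.induce (A : Set V) →g (G.induce c.supp).induce (C : Set c.supp) :=
      ⟨fun y => ⟨⟨y.1, hAsub y.1 y.2⟩, by simpa [C] using y.2⟩, fun {x y} h => h⟩
    refine SimpleGraph.Connected.map φ ?_ hA
    rintro ⟨⟨y, hy⟩, hy'⟩
    exact ⟨⟨y, by simpa [C] using hy'⟩, rfl⟩
  obtain ⟨T, h1, h2, h3⟩ := tree_of_conn (G.induce c.supp) c.connected_toSimpleGraph _ C N le_rfl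
    hCc (by
      rw [Finset.disjoint_left]
      intro w hw hw'
      simp only [C, N, Finset.mem_filter, Finset.mem_univ, true_and] at hw hw'
      exact ((openNbr_mem G A _).1 hw').1 hw)
    (by
      intro n hn
      simp only [N, Finset.mem_filter, Finset.mem_univ, true_and] at hn
      obtain ⟨-, a, ha, han⟩ := (openNbr_mem G A _).1 hn
      exact ⟨⟨a, hAsub a ha⟩, by simpa [C] using ha, han.symm⟩)
  have hcard : (openNbrSet G A).card ≤ N.card := by
    have : openNbrSet G A ⊆ N.image Subtype.val := by
      intro y hy
      exact Finset.mem_image.2 ⟨⟨y, hNsub y hy⟩, by simpa [N] using hy, rfl⟩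
    exact (Finset.card_le_card this).trans Finset.card_image_le
  refine hcard.trans (h3.trans ((le_ell h1 h2).trans ?_))
  exact le_csSup (ellGen_bdd G) ⟨c, rfl⟩

lemma upper
    (hcomp : ∀ c : G.ConnectedComponent, ∃ x y : V, x ∈ c.supp ∧ y ∈ c.supp ∧ x ≠ y) :
    RTD (Ccon G) ≤ ellGen G + 1 := by
  refine rtd_upper _ _ _ le_rfl ?_
  intro 𝒟 h𝒟
  by_cases hex : (𝒟.filter (fun C => C ≠ ∅)).Nonempty
  · obtain ⟨A, hA, hmin⟩ := Finset.exists_min_image _ Finset.card hex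
    simp only [Finset.mem_filter] at hA hmin
    have hAc : IsConnSet G A := by
      have := h𝒟 hA.1
      simp only [Ccon, Finset.mem_filter, Finset.mem_univ, true_and] at this
      exact this.resolve_left hA.2
    obtain ⟨x, hx⟩ := Finset.nonempty_iff_ne_empty.2 hA.2
    refine (tdmin_le hA.1).trans ((td_le (D := insert x (openNbrSet G A)) ?_).trans
      ((Finset.card_insert_le _ _).trans (Nat.succ_le_succ (openNbr_card G hcomp A hAc))))
    intro B hB hne
    by_contra hcon
    push Not at hcon
    have hxB : x ∈ B := (hcon x (by simp)).2 hx
    have hBne : B ≠ ∅ := Finset.nonempty_iff_ne_empty.1 ⟨x, hxB⟩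
    have hBc : IsConnSet G B := by
      have := h𝒟 hB
      simp only [Ccon, Finset.mem_filter, Finset.mem_univ, true_and] at this
      exact this.resolve_left hBne
    have hBA : B ⊆ A := by
      intro y hy
      by_contra hyA
      obtain ⟨p⟩ := hBc.preconnected ⟨x, hxB⟩ ⟨y, hy⟩
      obtain ⟨⟨⟨a, b⟩, hab⟩, -, ha, hb⟩ := p.exists_boundary_dart {w | w.1 ∈ A} hx hyA
      have hbN : b.1 ∈ openNbrSet G A := (openNbr_mem G A _).2 ⟨hb, a.1, ha, hab⟩
      exact hb ((hcon b.1 (by simp [hbN])).1 b.2)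
    exact hne (Finset.eq_of_subset_of_card_le hBA (hmin B ⟨hB, hBne⟩))
  · by_cases hD : 𝒟.Nonempty
    · obtain ⟨C, hC⟩ := hD
      refine (tdmin_le hC).trans ((td_le (D := ∅) ?_).trans (by simp))
      intro B hB hne
      exfalso
      have key : ∀ C ∈ 𝒟, C = ∅ := by
        intro C hC
        by_contra h
        exact hex ⟨C, by simp [hC, h]⟩
      exact hne ((key B hB).trans (key C hC).symm)
    · rw [Finset.not_nonempty_iff_eq_empty] at hD
      subst hD
      simp [TDmin]

end aux2

/-- For every finite simple graph `G` each of whose connected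
components has at least two vertices, `ℓ(G) ≤ RTD(C_con(G)) ≤ ℓ(G) + 1`, where
`ℓ(G)` is the maximum of `ℓ` over the connected components of `G`. -/
theorem con_rtd_bounds_general {V : Type*} [Fintype V] [DecidableEq V]
    (G : SimpleGraph V)
    (hcomp : ∀ c : G.ConnectedComponent, ∃ x y : V, x ∈ c.supp ∧ y ∈ c.supp ∧ x ≠ y) :
    ellGen G ≤ RTD (Ccon G) ∧ RTD (Ccon G) ≤ ellGen G + 1 := by
  refine ⟨?_, upper G hcomp⟩
  rcases Set.eq_empty_or_nonempty {k | ∃ c : G.ConnectedComponent, ell (G.induce c.supp) = k}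
    with h | h
  · unfold ellGen
    rw [h]
    simp
  · refine csSup_le h ?_
    rintro k ⟨c, rfl⟩
    exact lower G c
end

section
/- Let G be a connected finite simple graph. If there exists a subtree T of G with k leaves and an interior (non-leaf) vertex u of T such that every pair of distinct leaves of T can be connected by a path in G that contains neither u nor any other leaf of T, then VCD(C_con(G)) ≥ k + 1; in fact, the set consisting of u together with the k leaves of T is shattered by C_con(G). -/
open scoped Classical

theorem aux_leaf {W : Type*} [Fintype W] (T : SimpleGraph W) {v u : W} (p : T.Walk v u)
    (hp : p.IsPath) (hu : ¬ IsLeaf T u) : ∀ w ∈ p.support, IsLeaf T w → w = v := by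
  induction p with
  | nil => intro w hw _; simpa using hw
  | @cons x y z h q ih =>
    intro w hw hl
    rw [SimpleGraph.Walk.support_cons, List.mem_cons] at hw
    rcases hw with hw | hw
    · exact hw
    · exfalso
      rw [SimpleGraph.Walk.cons_isPath_iff] at hp
      have hwy := ih hp.1 hu w hw hl
      subst hwy
      cases q with
      | nil => exact hu hl
      | @cons _ t _ h' q' =>
        have hxt : x ≠ t := by
          rintro rfl
          apply hp.2
          simp
        unfold IsLeaf deg at hl
        rw [Finset.card_eq_one] at hl
        obtain ⟨a, ha⟩ := hl
        have h1 : x ∈ ({a} : Finset W) := by rw [← ha]; simpa using h.symm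
        have h2 : t ∈ ({a} : Finset W) := by rw [← ha]; simpa using h'
        rw [Finset.mem_singleton] at h1 h2
        exact hxt (h1.trans h2.symm)

theorem aux_conn {V : Type*} [Fintype V] [DecidableEq V] (G : SimpleGraph V)
    (S S' : Finset V) (hS : S' ⊆ S) (r : V) (hr : r ∈ S')
    (h : ∀ b ∈ S', ∃ p : G.Walk r b, ∀ w ∈ p.support, w ∈ S → w ∈ S') :
    ∃ C ∈ Ccon G, C ∩ S = S' := by
  refine ⟨Finset.univ.filter
    (fun v => ∃ p : G.Walk r v, ∀ w ∈ p.support, w ∈ S → w ∈ S'), ?_, ?_⟩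
  · unfold Ccon
    rw [Finset.mem_filter]
    refine ⟨Finset.mem_univ _, Or.inr ?_⟩
    unfold IsConnSet
    refine SimpleGraph.induce_connected_of_patches r ?_ ?_
    · simpa using h r hr
    · intro v hv
      simp only [Finset.coe_filter, Finset.mem_univ, true_and, Set.mem_setOf_eq] at hv
      obtain ⟨p, hp⟩ := hv
      refine ⟨{w | w ∈ p.support}, ?_, p.start_mem_support, p.end_mem_support,
        p.connected_induce_support _ _⟩
      intro w hw
      simp only [Finset.coe_filter, Finset.mem_univ, true_and, Set.mem_setOf_eq] at hw ⊢
      exact ⟨p.takeUntil w hw, fun x hx => hp x (p.support_takeUntil_subset_support hw hx)⟩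
  · ext v
    simp only [Finset.mem_inter, Finset.mem_filter, Finset.mem_univ, true_and]
    constructor
    · rintro ⟨⟨p, hp⟩, hv⟩
      exact hp v p.end_mem_support hv
    · intro hv
      exact ⟨h v hv, hS hv⟩

/-- If a connected finite simple graph `G` has a subtree `T` with
`k` leaves and an interior vertex `u` such that every pair of distinct leaves of `T`
can be connected by a path in `G` containing neither `u` nor any other leaf of `T`,
then the set consisting of `u` and the `k` leaves of `T` is shattered by `C_con(G)`;
in particular `VCD(C_con(G)) ≥ k + 1`. -/
theorem con_vcd_lower_of_subtree {V : Type*} [Fintype V] [DecidableEq V]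
    (G : SimpleGraph V) (hconn : G.Connected)
    (s : Set V) (T : SimpleGraph s) (hsub : T ≤ G.induce s) (htree : T.IsTree)
    (k : ℕ) (hk : leafCount T = k)
    (u : s) (hu : ¬ IsLeaf T u)
    (hpaths : ConnectableAvoiding G (Subtype.val '' {v : s | IsLeaf T v}) ↑u) :
    Shatters (Ccon G)
        (insert (↑u) ((Finset.univ.filter (fun v : s => IsLeaf T v)).image
          (Subtype.val : s → V))) ∧
      k + 1 ≤ VCD (Ccon G) := by
  have key : Shatters (Ccon G)
        (insert (↑u) ((Finset.univ.filter (fun v : s => IsLeaf T v)).image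
          (Subtype.val : s → V))) := by
    intro S' hS'
    by_cases huS : (u : V) ∈ S'
    · refine aux_conn G _ S' hS' u huS ?_
      intro b hb
      by_cases hbu : b = u
      · subst hbu
        refine ⟨SimpleGraph.Walk.nil, ?_⟩
        intro w hw _
        simp only [SimpleGraph.Walk.support_nil, List.mem_singleton] at hw
        rw [hw]; exact hb
      · have hb' := hS' hb
        rw [Finset.mem_insert, Finset.mem_image] at hb'
        obtain ⟨c, hc, rfl⟩ := hb'.resolve_left hbu
        obtain ⟨p, hp⟩ := htree.connected.exists_isPath c u
        let f : T →g G := ⟨Subtype.val, fun {a b} hab => hsub hab⟩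
        refine ⟨(p.map f).reverse, ?_⟩
        intro w hw hwS
        rw [SimpleGraph.Walk.support_reverse, List.mem_reverse,
          SimpleGraph.Walk.support_map, List.mem_map] at hw
        obtain ⟨x, hx, rfl⟩ := hw
        rw [Finset.mem_insert, Finset.mem_image] at hwS
        rcases hwS with h | ⟨y, hy, h⟩
        · rw [h]; exact huS
        · have hyx : y = x := Subtype.ext h
          subst hyx
          have := aux_leaf T p hp hu y hx (Finset.mem_filter.1 hy).2
          subst this
          exact hb
    · rcases Finset.eq_empty_or_nonempty S' with rfl | ⟨a, ha⟩
      · exact ⟨∅, by simp [Ccon], by simp⟩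
      · have hmem : ∀ b ∈ S', b ∈ Subtype.val '' {v : s | IsLeaf T v} := by
          intro b hb
          have hb' := hS' hb
          rw [Finset.mem_insert, Finset.mem_image] at hb'
          obtain ⟨c, hc, rfl⟩ := hb'.resolve_left (fun h => huS (h ▸ hb))
          exact ⟨c, (Finset.mem_filter.1 hc).2, rfl⟩
        refine aux_conn G _ S' hS' a ha ?_
        intro b hb
        by_cases hab : a = b
        · subst hab
          refine ⟨SimpleGraph.Walk.nil, ?_⟩
          intro w hw _
          simp only [SimpleGraph.Walk.support_nil, List.mem_singleton] at hw
          rw [hw]; exact hb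
        · obtain ⟨p, _, hp⟩ := hpaths a (hmem a ha) b (hmem b hb) hab
          refine ⟨p, fun w hw hwS => ?_⟩
          rw [Finset.mem_insert, Finset.mem_image] at hwS
          obtain ⟨y, hy, h⟩ := hwS.resolve_left (hp w hw).1
          rcases (hp w hw).2 ⟨y, (Finset.mem_filter.1 hy).2, h⟩ with h | h
          · rw [h]; exact ha
          · rw [h]; exact hb
  refine ⟨key, ?_⟩
  unfold VCD
  refine le_csSup ⟨Fintype.card V, ?_⟩ ⟨_, key, ?_⟩
  · rintro n ⟨S, _, rfl⟩
    exact Finset.card_le_univ S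
  · rw [Finset.card_insert_of_notMem, Finset.card_image_of_injective _ Subtype.val_injective]
    · rw [← hk]; rfl
    · rw [Finset.mem_image]
      rintro ⟨y, hy, h⟩
      have hyu : y = u := Subtype.ext h
      subst hyu
      exact hu (Finset.mem_filter.1 hy).2
end

section
/- For every connected finite simple graph G = (V,E) and every nonempty connected set X of G, there exists a spanning tree of the induced subgraph G[N_G(X)] that has all vertices of N°_G(X) among its leaves. -/
open scoped Classical

/-- For every connected finite simple graph `G` and every nonempty
connected set `X` of `G`, there is a spanning tree of the induced subgraph `G[N_G(X)]`
all of whose vertices from `N°_G(X)` are leaves. -/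
theorem spanning_tree_of_closed_nbr {V : Type*} [Fintype V] [DecidableEq V]
    (G : SimpleGraph V) (hconn : G.Connected)
    (Xs : Finset V) (hne : Xs.Nonempty) (hX : IsConnSet G Xs) :
    ∃ T : SimpleGraph ((closedNbrSet G Xs : Set V) : Type _),
      T ≤ G.induce (closedNbrSet G Xs : Set V) ∧ T.IsTree ∧
        ∀ v : (closedNbrSet G Xs : Set V), (↑v : V) ∈ openNbrSet G Xs → IsLeaf T v := by
  have hmem : ∀ v : V, v ∈ closedNbrSet G Xs ↔ ∃ x ∈ Xs, v = x ∨ G.Adj x v := by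
    intro v
    simp [closedNbrSet, closedNbr, nbrFinset]
  have hsub : ∀ v ∈ Xs, v ∈ closedNbrSet G Xs := fun v hv => (hmem v).2 ⟨v, hv, Or.inl rfl⟩
  have hf : ∀ v : (closedNbrSet G Xs : Set V), ∃ y : (closedNbrSet G Xs : Set V),
      (v : V) ∉ Xs → (y : V) ∈ Xs ∧ G.Adj v y := by
    intro v
    obtain ⟨x, hx, h⟩ := (hmem v).1 (by exact_mod_cast v.2)
    refine ⟨⟨x, by exact_mod_cast hsub x hx⟩, fun hv => ⟨hx, ?_⟩⟩
    rcases h with h | h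
    · exact absurd (h ▸ hx) hv
    · exact h.symm
  choose f hf using hf
  let H : SimpleGraph (closedNbrSet G Xs : Set V) :=
    { Adj := fun a b => G.Adj a b ∧ (((a : V) ∈ Xs ∧ (b : V) ∈ Xs) ∨
        ((a : V) ∉ Xs ∧ b = f a) ∨ ((b : V) ∉ Xs ∧ a = f b))
      symm := ⟨by
        rintro a b ⟨h, h'⟩
        exact ⟨h.symm, by tauto⟩⟩
      loopless := ⟨fun a h => G.loopless.irrefl _ h.1⟩ }
  have hHle : H ≤ G.induce (closedNbrSet G Xs : Set V) := fun a b h => h.1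
  let φ : G.induce (Xs : Set V) →g H :=
    { toFun := fun x => ⟨x.1, by exact_mod_cast hsub x.1 (by exact_mod_cast x.2)⟩
      map_rel' := by
        intro a b h
        exact ⟨h, Or.inl ⟨by exact_mod_cast a.2, by exact_mod_cast b.2⟩⟩ }
  obtain ⟨x0, hx0⟩ := hne
  let X0 : (Xs : Set V) := ⟨x0, by exact_mod_cast hx0⟩
  have hin : ∀ v : (closedNbrSet G Xs : Set V), (v : V) ∈ Xs → H.Reachable v (φ X0) := by
    intro v hv
    exact (hX.preconnected ⟨v.1, by exact_mod_cast hv⟩ X0).map φ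
  have hall : ∀ v : (closedNbrSet G Xs : Set V), H.Reachable v (φ X0) := by
    intro v
    by_cases hv : (v : V) ∈ Xs
    · exact hin v hv
    · have hadj : H.Adj v (f v) := ⟨(hf v hv).2, Or.inr (Or.inl ⟨hv, rfl⟩)⟩
      exact hadj.reachable.trans (hin _ (hf v hv).1)
  have hHc : H.Connected :=
    { preconnected := fun a b => (hall a).trans (hall b).symm
      nonempty := ⟨φ X0⟩ }
  obtain ⟨T, hT, htree⟩ := hHc.exists_isTree_le
  refine ⟨T, hT.trans hHle, htree, ?_⟩
  intro v hv
  have hv' : (v : V) ∉ Xs := (Finset.mem_sdiff.1 hv).2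
  have honly : ∀ w, T.Adj v w → w = f v := by
    intro w hw
    rcases (hT hw).2 with h | h | h
    · exact absurd h.1 hv'
    · exact h.2
    · exact absurd (h.2 ▸ (hf w h.1).1) hv'
  have hne' : v ≠ f v := fun h => hv' (by rw [h]; exact (hf v hv').1)
  have : Nontrivial (closedNbrSet G Xs : Set V) := ⟨v, f v, hne'⟩
  obtain ⟨w, hw⟩ := htree.connected.preconnected.exists_adj_of_nontrivial v
  unfold IsLeaf deg
  rw [Finset.card_eq_one]
  refine ⟨f v, ?_⟩
  ext u
  simp only [Finset.mem_filter, Finset.mem_univ, true_and, Finset.mem_singleton]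
  exact ⟨honly u, fun h => by rw [h, ← honly w hw]; exact hw⟩
end
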